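/- arXiv:2406.12811 — 5 statements merged into one kernel-verified Lean document; each statement's English description precedes it below -/
import Mathlib

section
/- Every finitary finite-matching-extendable matroid is matchable. That is, if M is a finitary matroid such that for every finite set 𝒜 of pairwise disjoint circuits of M and every ground-set element e ∉ ⋃𝒜 there exists a circuit C of M with e ∈ C and C ∩ ⋃𝒜 = ∅, then the ground set of M can be partitioned into circuits of M (i.e., there is a set of pairwise disjoint circuits whose union is the ground set). -/
open Set Function

variable {α : Type*}

/-- A circuit of a matroid `M`: a minimal dependent set. -/
def Matroid.IsMinDepCircuit (M : Matroid α) (C : Set α) : Prop := Minimal M.Dep C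

/-- The deletion `M ＼ F`: the restriction of `M` to the complement of `F`;
its circuits are exactly the circuits of `M` disjoint from `F`. -/
def Matroid.del (M : Matroid α) (F : Set α) : Matroid α := M.restrict (M.E \ F)

/-- A matching in `M`: a set of pairwise disjoint circuits of `M`. -/
def Matroid.IsMatching (M : Matroid α) (𝒜 : Set (Set α)) : Prop :=
  (∀ C ∈ 𝒜, M.IsMinDepCircuit C) ∧ 𝒜.Pairwise Disjoint

/-- `M` is matchable if its ground set can be partitioned into circuits of `M`. -/
def Matroid.Matchable (M : Matroid α) : Prop :=
  ∃ 𝒜 : Set (Set α), M.IsMatching 𝒜 ∧ ⋃₀ 𝒜 = M.E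

/-- `M` is finite matching extendable (f.m.e.): for every finite matching `𝒜` and every
ground-set element `e ∉ ⋃₀ 𝒜` there is a circuit through `e` disjoint from `⋃₀ 𝒜`. -/
def Matroid.FME (M : Matroid α) : Prop :=
  ∀ 𝒜 : Set (Set α), 𝒜.Finite → M.IsMatching 𝒜 → ∀ e ∈ M.E \ ⋃₀ 𝒜,
    ∃ C, M.IsMinDepCircuit C ∧ e ∈ C ∧ C ∩ ⋃₀ 𝒜 = ∅

/-!
By induction on `#M.E`. If `M.E` is countable, enumerate it and extend a finite matching step by
step. If `M.E` is uncountable, split it into pieces `Y` smaller than `M.E` with `M ↾ Y` again finite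
matching extendable.

The pieces are differences `Z \ W` of sets closed under countable-valued operations. One operation
ensures that `M ↾ Z` is extendable. Another handles the deletion of `W`: for each finite `P` fix a
maximal disjoint family of sets completing `P` to a circuit, cut it into countably infinite blocks
(or, when finite, keep it whole), and adjoin with each point its block. If `D ⊆ Z \ W` completes
`P ⊆ W` to a circuit, then `D` meets a member of an infinite block, and this block lies in `Z \ W`,
so it supplies infinitely many disjoint completions of `P`. Eliminating with these moves a given
circuit off `W`.
-/

namespace MatroidMatching

open Cardinal
open scoped Matroid

universe u v

variable {α : Type u}

section DisjointFamilies

lemma exists_disjoint_of_finite {ι : Type*} [Infinite ι] {f : ι → Set α}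
    (hf : Pairwise (Disjoint on f)) {A : Set α} (hA : A.Finite) : ∃ i, Disjoint (f i) A := by
  by_contra! hmeet
  choose a ha haA using fun i ↦ not_disjoint_iff.1 (hmeet i)
  have ha_inj : Injective a := fun i j hij ↦ by
    by_contra hne
    exact disjoint_left.1 (hf hne) (ha i) (hij ▸ ha j)
  exact infinite_of_injective_forall_mem ha_inj haA hA

lemma exists_disjoint_subfamily_meeting_all (𝒞 : Set (Set α)) :
    ∃ 𝒟 ⊆ 𝒞, 𝒟.Pairwise Disjoint ∧ ∀ C ∈ 𝒞, C.Nonempty → ∃ D ∈ 𝒟, ¬ Disjoint C D := by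
  obtain ⟨𝒟, hmax⟩ := zorn_subset {𝒟 | 𝒟 ⊆ 𝒞 ∧ 𝒟.Pairwise Disjoint} fun c hc hchain ↦
    ⟨⋃₀ c, ⟨sUnion_subset fun s hs ↦ (hc hs).1,
      (pairwise_sUnion hchain.directedOn).2 fun s hs ↦ (hc hs).2⟩, fun s ↦ subset_sUnion_of_mem⟩
  refine ⟨𝒟, hmax.prop.1, hmax.prop.2, fun C hC hCne ↦ ?_⟩
  by_contra! hdisj
  have hC𝒟 : C ∈ 𝒟 := hmax.le_of_ge
    ⟨insert_subset hC hmax.prop.1, hmax.prop.2.insert_of_symm fun D hD _ ↦ hdisj D hD⟩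
    (subset_insert C 𝒟) (mem_insert C 𝒟)
  exact hCne.ne_empty (disjoint_self.1 (hdisj C hC𝒟))

lemma nonempty_equiv_prod_nat (ι : Type*) [Infinite ι] : Nonempty (ι ≃ ι × ℕ) := by
  rw [← Cardinal.eq, mk_prod, lift_uzero, mk_nat, lift_aleph0, mul_aleph0_eq (aleph0_le_mk ι)]

-- When `𝒟` is infinite it is cut into countably infinite blocks, and `b y` is the union of the
-- block of the member of `𝒟` through `y`. A set closed under `b` contains or avoids every block.
lemma exists_countable_block_map {𝒟 : Set (Set α)} (hdisj : 𝒟.Pairwise Disjoint)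
    (hctbl : ∀ D ∈ 𝒟, D.Countable) :
    ∃ b : α → Set α, (∀ y, (b y).Countable ∧ b y ⊆ ⋃₀ 𝒟) ∧
      ∀ W Z : Set α, W.Nonempty → (∀ y ∈ W, b y ⊆ W) → (∀ y ∈ Z, b y ⊆ Z) →
      ∀ D ∈ 𝒟, ¬ Disjoint D (Z \ W) → ∀ A : Set α, A.Finite →
      ∃ D' ∈ 𝒟, D' ⊆ Z \ W ∧ Disjoint D' A := by
  rcases finite_or_infinite 𝒟 with hfin | hinf
  · refine ⟨fun _ ↦ ⋃₀ 𝒟, fun _ ↦ ⟨(toFinite 𝒟).countable.sUnion hctbl, subset_rfl⟩, ?_⟩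
    rintro W Z ⟨w, hw⟩ hW - D hD hmeet
    obtain ⟨y, hyD, -, hyW⟩ := not_disjoint_iff.1 hmeet
    exact absurd (hW w hw ⟨D, hD, hyD⟩) hyW
  obtain ⟨φ⟩ := nonempty_equiv_prod_nat 𝒟
  have huniq {D D' : 𝒟} {y : α} (hy : y ∈ D.1) (hy' : y ∈ D'.1) : D = D' := by
    by_contra hne
    exact disjoint_left.1 (hdisj D.2 D'.2 (Subtype.coe_ne_coe.2 hne)) hy hy'
  let b (y : α) : Set α := ⋃ (D : 𝒟) (_ : y ∈ D.1) (n : ℕ), (φ.symm ((φ D).1, n)).1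
  have mem_b {y : α} {D : 𝒟} (hy : y ∈ D.1) (n : ℕ) : (φ.symm ((φ D).1, n)).1 ⊆ b y :=
    fun x hx ↦ mem_iUnion.2 ⟨D, mem_iUnion₂.2 ⟨hy, n, hx⟩⟩
  refine ⟨b, fun y ↦ ⟨?_, ?_⟩, fun W Z _ hW hZ D hD hmeet A hA ↦ ?_⟩
  · have hsub : {D : 𝒟 | y ∈ D.1}.Subsingleton := fun D hD D' hD' ↦ huniq hD hD'
    exact hsub.finite.countable.biUnion fun D _ ↦ countable_iUnion fun n ↦ hctbl _ (Subtype.prop _)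
  · exact iUnion_subset fun D ↦ iUnion₂_subset fun _ n ↦ subset_sUnion_of_mem (Subtype.prop _)
  obtain ⟨y, hyD, hyZ, hyW⟩ := not_disjoint_iff.1 hmeet
  let block (n : ℕ) : 𝒟 := φ.symm ((φ ⟨D, hD⟩).1, n)
  have hblock_disj : Pairwise (Disjoint on fun n ↦ (block n).1) := fun m n hmn ↦
    hdisj (block m).2 (block n).2 fun h ↦ hmn <| by simpa [block] using Subtype.ext h
  have hblock_Z (n : ℕ) : (block n).1 ⊆ Z := (mem_b (D := ⟨D, hD⟩) hyD n).trans (hZ y hyZ)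
  have hblock_W (n : ℕ) : Disjoint (block n).1 W := disjoint_left.2 fun w hw hwW ↦ hyW <| by
    refine hW w hwW (mem_b hw (φ ⟨D, hD⟩).2 ?_)
    simpa [block] using hyD
  obtain ⟨n, hn⟩ := exists_disjoint_of_finite hblock_disj hA
  exact ⟨block n, (block n).2, subset_sdiff.2 ⟨hblock_Z n, hblock_W n⟩, hn⟩

end DisjointFamilies

section ClosedSets

/-- `T` is closed under the set-valued operation `G`, which takes a finite set of parameters and
one further argument. -/
def ClosedUnder (G : Finset α → α → Set α) (T : Set α) : Prop :=
  ∀ P : Finset α, ↑P ⊆ T → ∀ y ∈ T, G P y ⊆ T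

variable {G G' : Finset α → α → Set α}

lemma ClosedUnder.mono {T : Set α} (h : ClosedUnder G' T) (hG : ∀ P y, G P y ⊆ G' P y) :
    ClosedUnder G T :=
  fun P hP y hy ↦ (hG P y).trans (h P hP y hy)

lemma closedUnder_sInter {𝒯 : Set (Set α)} (h : ∀ T ∈ 𝒯, ClosedUnder G T) :
    ClosedUnder G (⋂₀ 𝒯) :=
  fun P hP y hy ↦ subset_sInter fun T hT ↦ h T hT P (hP.trans (sInter_subset_of_mem hT)) y (hy T hT)

lemma closedUnder_iUnion_of_subset_iUnion {ι : Type*} {T : ι → Set α} (hT : Directed (· ⊆ ·) T)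
    (h : ∀ i, ∀ P : Finset α, ↑P ⊆ T i → ∀ y ∈ T i, G P y ⊆ ⋃ i, T i) :
    ClosedUnder G (⋃ i, T i) := by
  classical
  intro P hP y hy
  have : Nonempty ι := (mem_iUnion.1 hy).nonempty
  have hins : ((insert y P : Finset α) : Set α) ⊆ ⋃ i, T i := by
    simpa [insert_subset_iff] using ⟨mem_iUnion.1 hy, hP⟩
  obtain ⟨i, hi⟩ := hT.exists_mem_subset_of_finset_subset_biUnion hins
  rw [Finset.coe_insert, insert_subset_iff] at hi
  exact h i P hi.2 y hi.1

lemma closedUnder_iUnion {ι : Type*} {T : ι → Set α} (hT : Directed (· ⊆ ·) T)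
    (h : ∀ i, ClosedUnder G (T i)) : ClosedUnder G (⋃ i, T i) :=
  closedUnder_iUnion_of_subset_iUnion hT fun i P hP y hy ↦
    (h i P hP y hy).trans (subset_iUnion T i)

/-- The closure operator sending a set to the least superset closed under `G`. -/
def closureUnder (G : Finset α → α → Set α) : ClosureOperator (Set α) :=
  .ofCompletePred (ClosedUnder G) fun _ ↦ closedUnder_sInter

lemma mk_iUnion_le_of_le {ι : Type v} {f : ι → Set α} {c : Cardinal.{u}} (hc : ℵ₀ ≤ c)
    (hι : lift.{u} #ι ≤ lift.{v} c) (hf : ∀ i, #(f i) ≤ c) : #(⋃ i, f i) ≤ c := by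
  rw [← lift_le.{v}]
  calc lift.{v} #(⋃ i, f i) ≤ lift.{u} #ι * ⨆ i, lift.{v} #(f i) := mk_iUnion_le_lift f
    _ ≤ lift.{v} c * lift.{v} c := mul_le_mul' hι (ciSup_le' fun i ↦ lift_le.2 (hf i))
    _ = lift.{v} c := mul_eq_self (aleph0_le_lift.2 hc)

lemma mk_finset_le_max (β : Type u) : #(Finset β) ≤ max ℵ₀ #β := by
  classical
  exact (mk_le_of_surjective List.toFinset_surjective).trans (mk_list_le_max β)

/-- One round of adjoining to `S` the values of `G` at arguments from `S`. -/
def adjoinValues (G : Finset α → α → Set α) (S : Set α) : Set α :=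
  S ∪ ⋃ p : Finset S × S, G (p.1.map (Embedding.subtype _)) p.2

lemma subset_adjoinValues {S : Set α} {P : Finset α} {y : α} (hP : ↑P ⊆ S) (hy : y ∈ S) :
    G P y ⊆ adjoinValues G S := by
  classical
  refine subset_union_of_subset_right (subset_iUnion_of_subset
    ((P.subtype (· ∈ S), ⟨y, hy⟩) : Finset S × S) ?_) S
  rw [Finset.subtype_map_of_mem fun x hx ↦ hP hx]

lemma mk_adjoinValues_le (hG : ∀ P y, (G P y).Countable) {S : Set α} {c : Cardinal.{u}}
    (hc : ℵ₀ ≤ c) (hS : #S ≤ c) : #(adjoinValues G S) ≤ c := by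
  have hargs : #(Finset S × S) ≤ c := by
    rw [mk_prod, lift_id, lift_id]
    exact mul_le_of_le hc ((mk_finset_le_max S).trans (max_le hc hS)) hS
  have hvalues : #(⋃ p : Finset S × S, G (p.1.map (Embedding.subtype _)) p.2) ≤ c :=
    mk_iUnion_le_of_le hc (lift_le.2 hargs) fun p ↦ (hG _ _).le_aleph0.trans hc
  exact (mk_union_le _ _).trans (add_le_of_le hc hS hvalues)

lemma mk_closureUnder_le (hG : ∀ P y, (G P y).Countable) (S : Set α) :
    #(closureUnder G S) ≤ max ℵ₀ #S := by
  let U (n : ℕ) : Set α := (adjoinValues G)^[n] S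
  have hU_succ (n : ℕ) : U (n + 1) = adjoinValues G (U n) := iterate_succ_apply' _ n S
  have hU_mono : Monotone U := monotone_nat_of_le_succ fun n ↦ hU_succ n ▸ subset_union_left
  have hU_closed : ClosedUnder G (⋃ n, U n) :=
    closedUnder_iUnion_of_subset_iUnion hU_mono.directed_le fun n P hP y hy ↦
      subset_iUnion_of_subset (n + 1) (hU_succ n ▸ subset_adjoinValues hP hy)
  have hU_card (n : ℕ) : #(U n) ≤ max ℵ₀ #S := by
    induction n with
    | zero => exact le_max_right _ _
    | succ n ih => exact hU_succ n ▸ mk_adjoinValues_le hG (le_max_left _ _) ih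
  calc #(closureUnder G S) ≤ #(⋃ n, U n) :=
        mk_le_mk_of_subset <| (closureUnder G).closure_min (subset_iUnion U 0) hU_closed
    _ ≤ max ℵ₀ #S := mk_iUnion_le_of_le (le_max_left _ _) (by simp) hU_card

lemma exists_filtration (hG : ∀ P y, (G P y).Countable) {X : Set α} (hX : ClosedUnder G X)
    (hX_unc : ¬ X.Countable) :
    ∃ Z : (#X).ord.ToType → Set α, Monotone Z ∧ (∀ i, ClosedUnder G (Z i)) ∧
      (∀ i, #(Z i) < #X) ∧ ⋃ i, Z i = X := by
  have hX_card : ℵ₀ < #X := by rwa [← not_le, le_aleph0_iff_set_countable]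
  obtain ⟨x⟩ : Nonempty ((#X).ord.ToType ≃ X) := Cardinal.eq.1 (mk_ord_toType _)
  let S (i : (#X).ord.ToType) : Set α := (fun j ↦ (x j).1) '' Iic i
  have hS_card (i) : #(S i) < #X :=
    calc #(S i) ≤ #(Iic i) := mk_image_le
      _ ≤ #(Iio i) + 1 := by rw [← Iio_insert]; exact mk_insert_le
      _ < #X := add_lt_of_lt hX_card.le (by simpa using mk_Iio_lt i) (one_lt_aleph0.trans hX_card)
  refine ⟨fun i ↦ closureUnder G (S i),
    fun i j hij ↦ (closureUnder G).monotone (image_mono (Iic_subset_Iic.2 hij)),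
    fun i ↦ (closureUnder G).isClosed_closure (S i),
    fun i ↦ (mk_closureUnder_le hG _).trans_lt (max_lt hX_card (hS_card i)),
    subset_antisymm (iUnion_subset fun i ↦ (closureUnder G).closure_min ?_ hX) fun y hy ↦ ?_⟩
  · rintro _ ⟨j, -, rfl⟩
    exact (x j).2
  · refine mem_iUnion.2 ⟨x.symm ⟨y, hy⟩, (closureUnder G).le_closure _ ?_⟩
    exact ⟨_, self_mem_Iic, by simp⟩

/-- The points of `Z i` that occur in no earlier `Z j`. Unlike `disjointed`, this allows any
well-ordered index type. -/
def layer {ι : Type*} [Preorder ι] (Z : ι → Set α) (i : ι) : Set α :=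
  Z i \ ⋃ j : Iio i, Z j

lemma pairwise_disjoint_layer {ι : Type*} [LinearOrder ι] (Z : ι → Set α) :
    Pairwise (Disjoint on layer Z) :=
  (pairwise_disjoint_on _).2 fun i _ hij ↦ disjoint_left.2 fun _ hx hx' ↦
    hx'.2 (mem_iUnion.2 ⟨⟨i, hij⟩, hx.1⟩)

lemma iUnion_layer {ι : Type*} [LinearOrder ι] [WellFoundedLT ι] (Z : ι → Set α) :
    ⋃ i, layer Z i = ⋃ i, Z i := by
  refine subset_antisymm (iUnion_mono fun i ↦ sdiff_subset) (iUnion_subset fun i ↦ ?_)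
  intro x hx
  obtain ⟨m, hm, hmin⟩ := exists_minimal_of_wellFoundedLT (fun i ↦ x ∈ Z i) ⟨i, hx⟩
  refine mem_iUnion.2 ⟨m, hm, fun hx' ↦ ?_⟩
  obtain ⟨⟨j, hj⟩, hxj⟩ := mem_iUnion.1 hx'
  exact (hmin hxj hj.le).not_gt hj

end ClosedSets

variable {M : Matroid α}

section Matchings

lemma isMatching_restrict_iff {R : Set α} {𝒜 : Set (Set α)} (hR : R ⊆ M.E) :
    (M ↾ R).IsMatching 𝒜 ↔ M.IsMatching 𝒜 ∧ ∀ C ∈ 𝒜, C ⊆ R := by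
  have hcircuit (C : Set α) :
      (M ↾ R).IsMinDepCircuit C ↔ M.IsMinDepCircuit C ∧ C ⊆ R := M.restrict_isCircuit_iff hR
  simp only [Matroid.IsMatching, hcircuit, forall_and]
  tauto

lemma sUnion_subset_ground_of_isMatching {𝒜 : Set (Set α)} (h𝒜 : M.IsMatching 𝒜) : ⋃₀ 𝒜 ⊆ M.E :=
  sUnion_subset fun C hC ↦ (h𝒜.1 C hC).prop.subset_ground

lemma finite_sUnion_of_isMatching [M.Finitary] {𝒜 : Set (Set α)} (hfin : 𝒜.Finite)
    (h𝒜 : M.IsMatching 𝒜) : (⋃₀ 𝒜).Finite :=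
  hfin.sUnion fun C hC ↦ Matroid.IsCircuit.finite (h𝒜.1 C hC)

lemma isMatching_iUnion {ι : Type*} {𝒜 : ι → Set (Set α)} (hdir : Directed (· ⊆ ·) 𝒜)
    (h𝒜 : ∀ i, M.IsMatching (𝒜 i)) : M.IsMatching (⋃ i, 𝒜 i) :=
  ⟨fun C hC ↦ let ⟨i, hi⟩ := mem_iUnion.1 hC; (h𝒜 i).1 C hi,
    (pairwise_iUnion hdir).2 fun i ↦ (h𝒜 i).2⟩

lemma matchable_of_partition {ι : Type*} {Y : ι → Set α} (hdisj : Pairwise (Disjoint on Y))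
    (hY : ⋃ i, Y i = M.E) (h : ∀ i, (M ↾ Y i).Matchable) : M.Matchable := by
  choose 𝒜 h𝒜 h𝒜Y using h
  replace h𝒜 (i : ι) := (isMatching_restrict_iff (hY ▸ subset_iUnion Y i)).1 (h𝒜 i)
  refine ⟨⋃ i, 𝒜 i, ⟨fun C hC ↦ ?_, fun C hC C' hC' hne ↦ ?_⟩, ?_⟩
  · obtain ⟨i, hi⟩ := mem_iUnion.1 hC
    exact (h𝒜 i).1.1 C hi
  · obtain ⟨i, hi⟩ := mem_iUnion.1 hC
    obtain ⟨j, hj⟩ := mem_iUnion.1 hC'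
    obtain rfl | hij := eq_or_ne i j
    · exact (h𝒜 i).1.2 hi hj hne
    · exact (hdisj hij).mono ((h𝒜 i).2 C hi) ((h𝒜 j).2 C' hj)
  · rw [sUnion_iUnion, ← hY]
    exact iUnion_congr h𝒜Y

lemma exists_finite_isMatching_superset_mem (hM : M.FME) {𝒜 : Set (Set α)} (hfin : 𝒜.Finite)
    (h𝒜 : M.IsMatching 𝒜) {e : α} (he : e ∈ M.E) :
    ∃ ℬ, 𝒜 ⊆ ℬ ∧ ℬ.Finite ∧ M.IsMatching ℬ ∧ e ∈ ⋃₀ ℬ := by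
  by_cases he𝒜 : e ∈ ⋃₀ 𝒜
  · exact ⟨𝒜, subset_rfl, hfin, h𝒜, he𝒜⟩
  obtain ⟨C, hC, heC, hC𝒜⟩ := hM 𝒜 hfin h𝒜 e ⟨he, he𝒜⟩
  rw [← disjoint_iff_inter_eq_empty, disjoint_sUnion_right] at hC𝒜
  exact ⟨insert C 𝒜, subset_insert C 𝒜, hfin.insert C,
    ⟨forall_mem_insert.2 ⟨hC, h𝒜.1⟩, h𝒜.2.insert_of_symm fun D hD _ ↦ hC𝒜 D hD⟩,
    C, mem_insert C 𝒜, heC⟩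

lemma matchable_of_countable_ground (hM : M.FME) (hE : M.E.Countable) : M.Matchable := by
  let 𝔐 := {𝒜 : Set (Set α) // 𝒜.Finite ∧ M.IsMatching 𝒜}
  let covering (e : M.E) : Order.Cofinal 𝔐 :=
    { carrier := {𝒜 | e.1 ∈ ⋃₀ 𝒜.1}
      isCofinal := fun 𝒜 ↦
        let ⟨ℬ, h𝒜ℬ, hfin, hℬ, heℬ⟩ :=
          exists_finite_isMatching_superset_mem hM 𝒜.2.1 𝒜.2.2 e.2
        ⟨⟨ℬ, hfin, hℬ⟩, heℬ, h𝒜ℬ⟩ }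
  have : Encodable M.E := hE.toEncodable
  let empty : 𝔐 := ⟨∅, finite_empty, by simp [Matroid.IsMatching]⟩
  let 𝒮 (n : ℕ) : 𝔐 := Order.sequenceOfCofinals empty covering n
  have h𝒮_mono : Monotone fun n ↦ (𝒮 n).1 := Order.sequenceOfCofinals.monotone empty covering
  have h𝒮 : M.IsMatching (⋃ n, (𝒮 n).1) := isMatching_iUnion h𝒮_mono.directed_le fun n ↦ (𝒮 n).2.2
  refine ⟨_, h𝒮, subset_antisymm (sUnion_subset_ground_of_isMatching h𝒮) fun e he ↦ ?_⟩
  rw [sUnion_iUnion]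
  exact mem_iUnion.2 ⟨_, Order.sequenceOfCofinals.encode_mem empty covering ⟨e, he⟩⟩

end Matchings

section Deletion

/-- Every way of completing a nonempty subset `P` of `W` to a circuit by elements outside `W` can be
replaced by one that avoids a prescribed finite set. This is what makes finite matching
extendability survive the deletion of `W`. -/
def HasAvoidingCompletions (M : Matroid α) (W : Set α) : Prop :=
  ∀ P ⊆ W, P.Nonempty → ∀ D ⊆ M.E \ W, D.Nonempty → M.IsCircuit (P ∪ D) →
    ∀ A : Set α, A.Finite → ∃ D' ⊆ M.E \ W, Disjoint D' A ∧ M.IsCircuit (P ∪ D')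

lemma exists_isCircuit_inter_ssubset [M.Finitary] {W C A : Set α} {e : α}
    (hW : HasAvoidingCompletions M W) (hA : A.Finite) (hC : M.IsCircuit C) (heC : e ∈ C)
    (heW : e ∉ W) (hCA : Disjoint C A) (hCW : (C ∩ W).Nonempty) :
    ∃ C', M.IsCircuit C' ∧ e ∈ C' ∧ Disjoint C' A ∧ C' ∩ W ⊂ C ∩ W := by
  -- Replace `C \ W` by a completion of `C ∩ W` disjoint from `C`, and eliminate a point of
  -- `C ∩ W` between the two circuits.
  obtain ⟨D, hDW, hDA, hD⟩ := hW (C ∩ W) inter_subset_right hCW (C \ W)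
    (sdiff_subset_sdiff_left hC.subset_ground) ⟨e, heC, heW⟩ (by rwa [inter_union_sdiff])
    (A ∪ C) (hA.union hC.finite)
  obtain ⟨hDA, hDC⟩ := disjoint_union_right.1 hDA
  obtain ⟨p, hpC, hpW⟩ := hCW
  have heD : e ∉ C ∩ W ∪ D := by
    rintro (he | he)
    exacts [heW he.2, disjoint_left.1 hDC he heC]
  obtain ⟨C', hC'sub, hC', heC'⟩ :=
    hC.strong_elimination hD hpC (Or.inl ⟨hpC, hpW⟩) heC heD
  have hC'CD : C' ⊆ (C ∪ D) \ {p} := hC'sub.trans <| sdiff_subset_sdiff_left <|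
    union_subset subset_union_left <| union_subset_union_left D inter_subset_left
  refine ⟨C', hC', heC', ?_, ?_⟩
  · exact (disjoint_union_left.2 ⟨hCA, hDA⟩).mono_left (hC'CD.trans sdiff_subset)
  · have hsub : C' ∩ W ⊆ C ∩ W := fun x hx ↦
      ⟨(hC'CD hx.1).1.resolve_right fun hxD ↦ (hDW hxD).2 hx.2, hx.2⟩
    exact hsub.ssubset_of_mem_notMem ⟨hpC, hpW⟩ fun hp ↦ (hC'CD hp.1).2 rfl

lemma exists_isCircuit_disjoint [M.Finitary] {W C A : Set α} {e : α}
    (hW : HasAvoidingCompletions M W) (hA : A.Finite) (hC : M.IsCircuit C) (heC : e ∈ C)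
    (heW : e ∉ W) (hCA : Disjoint C A) :
    ∃ C', M.IsCircuit C' ∧ e ∈ C' ∧ Disjoint C' A ∧ Disjoint C' W := by
  induction hn : (C ∩ W).ncard using Nat.strong_induction_on generalizing C with
  | _ n ih =>
    rcases (C ∩ W).eq_empty_or_nonempty with hCW | hCW
    · exact ⟨C, hC, heC, hCA, disjoint_iff_inter_eq_empty.2 hCW⟩
    obtain ⟨C', hC', heC', hC'A, hlt⟩ :=
      exists_isCircuit_inter_ssubset hW hA hC heC heW hCA hCW
    exact ih _ (hn ▸ ncard_lt_ncard hlt (hC.finite.inter_of_left W)) hC' heC' hC'A rfl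

lemma fme_del [M.Finitary] {W : Set α} (hM : M.FME) (hW : HasAvoidingCompletions M W) :
    (M.del W).FME := by
  rintro 𝒜 hfin h𝒜 e ⟨⟨heE, heW⟩, he𝒜⟩
  replace h𝒜 := ((isMatching_restrict_iff sdiff_subset).1 h𝒜).1
  obtain ⟨C, hC, heC, hC𝒜⟩ := hM 𝒜 hfin h𝒜 e ⟨heE, he𝒜⟩
  obtain ⟨C', hC', heC', hC'𝒜, hC'W⟩ := exists_isCircuit_disjoint hW
    (finite_sUnion_of_isMatching hfin h𝒜) hC heC heW (disjoint_iff_inter_eq_empty.2 hC𝒜)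
  exact ⟨C', (M.restrict_isCircuit_iff sdiff_subset).2
    ⟨hC', subset_sdiff.2 ⟨hC'.subset_ground, hC'W⟩⟩, heC', hC'𝒜.inter_eq⟩

end Deletion

section Operations

lemma exists_operation_fme_restrict [M.Finitary] (hM : M.FME) :
    ∃ H : Finset α → α → Set α, (∀ P y, (H P y).Countable) ∧ (∀ P y, H P y ⊆ M.E) ∧
      ∀ Z ⊆ M.E, ClosedUnder H Z → (M ↾ Z).FME := by
  have hchoice (P : Finset α) (y : α) : ∃ H : Set α, H.Countable ∧ H ⊆ M.E ∧
      ((∃ C, M.IsCircuit C ∧ y ∈ C ∧ Disjoint C P) → M.IsCircuit H ∧ y ∈ H ∧ Disjoint H P) := by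
    by_cases h : ∃ C, M.IsCircuit C ∧ y ∈ C ∧ Disjoint C P
    · obtain ⟨C, hC⟩ := h
      exact ⟨C, hC.1.finite.countable, hC.1.subset_ground, fun _ ↦ hC⟩
    · exact ⟨∅, countable_empty, empty_subset _, fun h' ↦ absurd h' h⟩
  choose H hH_ctbl hH_ground hH using hchoice
  refine ⟨H, hH_ctbl, hH_ground, fun Z hZE hZ 𝒜 hfin h𝒜 e ⟨heZ, he𝒜⟩ ↦ ?_⟩
  obtain ⟨h𝒜, h𝒜Z⟩ := (isMatching_restrict_iff hZE).1 h𝒜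
  obtain ⟨P, hP⟩ := (finite_sUnion_of_isMatching hfin h𝒜).exists_finset_coe
  obtain ⟨C, hC, heC, hC𝒜⟩ := hM 𝒜 hfin h𝒜 e ⟨hZE heZ, he𝒜⟩
  obtain ⟨hHc, heH, hHP⟩ := hH P e ⟨C, hC, heC, by rwa [hP, disjoint_iff_inter_eq_empty]⟩
  exact ⟨H P e, (M.restrict_isCircuit_iff hZE).2
    ⟨hHc, hZ P (hP ▸ sUnion_subset h𝒜Z) e heZ⟩, heH, by rwa [← hP, ← disjoint_iff_inter_eq_empty]⟩

lemma exists_operation_hasAvoidingCompletions (M : Matroid α) [M.Finitary] :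
    ∃ B : Finset α → α → Set α, (∀ P y, (B P y).Countable) ∧ (∀ P y, B P y ⊆ M.E) ∧
      ∀ W Z, Z ⊆ M.E → ClosedUnder B W → ClosedUnder B Z → W ⊆ Z →
        HasAvoidingCompletions (M ↾ Z) W := by
  have hfamily (P : Set α) := exists_disjoint_subfamily_meeting_all {D | M.IsCircuit (P ∪ D)}
  choose 𝒟 h𝒟 h𝒟_disj h𝒟_meet using hfamily
  have hground (P) : ⋃₀ 𝒟 P ⊆ M.E :=
    sUnion_subset fun D hD ↦ subset_union_right.trans (h𝒟 P hD).subset_ground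
  have hctbl (P) (D) (hD : D ∈ 𝒟 P) : D.Countable :=
    ((h𝒟 P hD).finite.subset subset_union_right).countable
  choose b hb hb_block using fun P ↦ exists_countable_block_map (h𝒟_disj P) (hctbl P)
  refine ⟨fun P ↦ b P, fun P y ↦ (hb P y).1, fun P y ↦ (hb P y).2.trans (hground P), ?_⟩
  intro W Z hZE hW hZ hWZ P hPW hPne D hDsub hDne hPD A hA
  rw [M.restrict_isCircuit_iff hZE] at hPD
  lift P to Finset α using hPD.1.finite.subset subset_union_left
  obtain ⟨D₀, hD₀, hDD₀⟩ := h𝒟_meet P D hPD.1 hDne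
  obtain ⟨D', hD', hD'sub, hD'A⟩ := hb_block P W Z (hPne.mono hPW) (hW P hPW)
    (hZ P (hPW.trans hWZ)) D₀ hD₀ (fun h ↦ hDD₀ (h.symm.mono_left hDsub)) A hA
  exact ⟨D', hD'sub, hD'A, (M.restrict_isCircuit_iff hZE).2
    ⟨h𝒟 P hD', union_subset (hPW.trans hWZ) (hD'sub.trans sdiff_subset)⟩⟩

lemma exists_operation_fme_restrict_diff [M.Finitary] (hM : M.FME) :
    ∃ G : Finset α → α → Set α, (∀ P y, (G P y).Countable) ∧ ClosedUnder G M.E ∧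
      ∀ W Z, W ⊆ Z → Z ⊆ M.E → ClosedUnder G W → ClosedUnder G Z → (M ↾ (Z \ W)).FME := by
  obtain ⟨H, hH_ctbl, hH_ground, hH⟩ := exists_operation_fme_restrict hM
  obtain ⟨B, hB_ctbl, hB_ground, hB⟩ := exists_operation_hasAvoidingCompletions M
  refine ⟨fun P y ↦ H P y ∪ B P y, fun P y ↦ (hH_ctbl P y).union (hB_ctbl P y),
    fun P _ y _ ↦ union_subset (hH_ground P y) (hB_ground P y), fun W Z hWZ hZE hW hZ ↦ ?_⟩
  have hZ_fme : (M ↾ Z).FME := hH Z hZE (hZ.mono fun _ _ ↦ subset_union_left)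
  have hWZ_compl : HasAvoidingCompletions (M ↾ Z) W := hB W Z hZE
    (hW.mono fun _ _ ↦ subset_union_right) (hZ.mono fun _ _ ↦ subset_union_right) hWZ
  rw [← M.restrict_restrict_eq sdiff_subset]
  exact fme_del hZ_fme hWZ_compl

lemma exists_fme_partition [M.Finitary] (hM : M.FME) (hE : ¬ M.E.Countable) :
    ∃ (ι : Type u) (Y : ι → Set α), Pairwise (Disjoint on Y) ∧ ⋃ i, Y i = M.E ∧
      ∀ i, #(Y i) < #M.E ∧ (M ↾ Y i).FME := by
  obtain ⟨G, hG, hG_ground, hG_fme⟩ := exists_operation_fme_restrict_diff hM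
  obtain ⟨Z, hZ_mono, hZ, hZ_card, hZ_union⟩ := exists_filtration hG hG_ground hE
  have hearlier (i) : ClosedUnder G (⋃ j : Iio i, Z j) :=
    closedUnder_iUnion (hZ_mono.comp (Subtype.mono_coe _)).directed_le fun j ↦ hZ j.1
  refine ⟨_, layer Z, pairwise_disjoint_layer Z, (iUnion_layer Z).trans hZ_union, fun i ↦ ⟨?_, ?_⟩⟩
  · exact (mk_le_mk_of_subset sdiff_subset).trans_lt (hZ_card i)
  · exact hG_fme _ _ (iUnion_subset fun j ↦ hZ_mono j.2.le) (hZ_union ▸ subset_iUnion Z i)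
      (hearlier i) (hZ i)

end Operations

end MatroidMatching

/-- Every finitary finite-matching-extendable matroid is matchable. -/
theorem fme_matchable (M : Matroid α) [M.Finitary] (hfme : M.FME) : M.Matchable := by
  induction hκ : Cardinal.mk M.E using WellFoundedLT.induction generalizing M with
  | ind κ ih =>
    by_cases hE : M.E.Countable
    · exact MatroidMatching.matchable_of_countable_ground hfme hE
    obtain ⟨ι, Y, hdisj, hunion, hY⟩ := MatroidMatching.exists_fme_partition hfme hE
    exact MatroidMatching.matchable_of_partition hdisj hunion fun i ↦
      ih _ (hκ ▸ (hY i).1) _ (hY i).2 rfl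
end

section
/- For every infinite cardinal λ, every finitary matroid M admits a λ-cocircuit faithful partition: a partition {F_i : i ∈ I} of the ground set E of M such that (i) |F_i| ≤ λ for every i ∈ I; (ii) every cocircuit D of the restriction M|F_i with |D| < λ is a cocircuit of M, for every i ∈ I; and (iii) every cocircuit D of M with |D| ≤ λ is contained in F_i for some i ∈ I. -/
open Set Function

universe u

variable {α : Type u}

/-!
For every finite set `Y` fix a maximal disjoint family `packing M Y` of sets that complete `Y` to a
circuit. The ground set is filtered by an increasing transfinite sequence of stages which absorb
the packings of their finite subsets that are small (they are saturated) and contain many members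
of those that are large (they are rich), even among the members avoiding all earlier stages. The
parts are the layers: each stage minus the earlier ones.

*Small cocircuits are not split.* Let `X` be saturated and `D` a small cocircuit with `e ∈ D ∩ X`
and `f ∈ D \ X`. Some circuit `C` has `C ∩ D = {e, f}`. By maximality, the packing of `C ∩ X` was
not absorbed, so it is large and has a member `Q` missing `D`. But then `Q ∪ (C ∩ X)` is a circuit
meeting `D` in `e` only.

*Layers are faithful.* It suffices that a circuit `C` meeting a small subset `D` of a layer in a
single element can be moved into the layer without changing `C ∩ D`. Replacing the part of `C`
outside the stage by a member of a packing, `C` moves into the stage. If `B` is the union of the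
earlier stages, circuit elimination against `Q ∪ (C ∩ B)`, with `Q` a member of the packing of
`C ∩ B` avoiding `B` and `D`, removes the elements of `C ∩ B` one at a time.

Layers are smaller than the ground set, so the theorem follows by induction on its cardinality. The
filtration is applied at `θ⁺` in place of `θ`: a cocircuit of size `θ` then remains one in the
restriction to a layer.
-/

namespace Laviolette

open Cardinal
open scoped Matroid

universe v

/-! ### Cardinalities of unions and disjoint families -/

lemma mk_iUnion_le_of_le {ι : Type v} (f : ι → Set α) {κ : Cardinal.{u}} (hκ : ℵ₀ ≤ κ)
    (hι : lift.{u} #ι ≤ lift.{v} κ) (hf : ∀ i, #(f i) ≤ κ) : #(⋃ i, f i) ≤ κ := by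
  rw [← lift_le.{v}]
  calc lift.{v} #(⋃ i, f i)
      ≤ lift.{u} #ι * ⨆ i, lift.{v} #(f i) := mk_iUnion_le_lift f
    _ ≤ lift.{v} κ * lift.{v} κ := mul_le_mul' hι (ciSup_le' fun i ↦ lift_le.2 (hf i))
    _ = lift.{v} κ := mul_eq_self (aleph0_le_lift.2 hκ)

lemma mk_sUnion_le_of_finite {𝓡 : Set (Set α)} {κ : Cardinal.{u}} (hκ : ℵ₀ ≤ κ) (h𝓡 : #𝓡 ≤ κ)
    (hfin : ∀ Q ∈ 𝓡, Q.Finite) : #(⋃₀ 𝓡) ≤ κ := by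
  rw [sUnion_eq_iUnion]
  exact mk_iUnion_le_of_le _ hκ (lift_le.2 h𝓡) fun Q ↦ (hfin Q Q.2).lt_aleph0.le.trans hκ

lemma mk_finset_le {κ : Cardinal.{u}} (hκ : ℵ₀ ≤ κ) {X : Type u} (hX : #X ≤ κ) :
    #(Finset X) ≤ κ := by
  rcases finite_or_infinite X with _ | _
  · exact (lt_aleph0_of_finite _).le.trans hκ
  · rwa [mk_finset_of_infinite]

lemma exists_disjoint_of_mk_lt {𝓡 : Set (Set α)} (h𝓡 : 𝓡.PairwiseDisjoint id) {D : Set α}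
    (hD : #D < #𝓡) : ∃ Q ∈ 𝓡, Disjoint Q D := by
  by_contra! hmeets
  choose g hgQ hgD using fun Q : 𝓡 ↦ not_disjoint_iff.1 (hmeets Q Q.2)
  refine hD.not_ge (mk_le_of_injective (f := fun Q ↦ (⟨g Q, hgD Q⟩ : D)) fun Q R hQR ↦ ?_)
  have hg : g Q = g R := congrArg Subtype.val hQR
  exact Subtype.ext (h𝓡.elim_set Q.2 R.2 (g Q) (hgQ Q) (hg ▸ hgQ R))

lemma lt_mk_setOf_disjoint {𝓡 : Set (Set α)} (h𝓡 : 𝓡.PairwiseDisjoint id) {B : Set α}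
    {κ : Cardinal.{u}} (hκ : ℵ₀ ≤ κ) (hB : #B ≤ κ) (h : κ < #𝓡) :
    κ < #{Q ∈ 𝓡 | Disjoint Q B} := by
  have hmeets : #{Q ∈ 𝓡 | ¬ Disjoint Q B} ≤ κ := by
    by_contra! hlt
    obtain ⟨Q, hQ, hQB⟩ :=
      exists_disjoint_of_mk_lt (h𝓡.subset (sep_subset 𝓡 fun Q ↦ ¬ Disjoint Q B)) (hB.trans_lt hlt)
    exact hQ.2 hQB
  by_contra! hle
  refine h.not_ge ?_
  calc #𝓡
      ≤ #↑({Q ∈ 𝓡 | Disjoint Q B} ∪ {Q ∈ 𝓡 | ¬ Disjoint Q B} : Set (Set α)) :=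
        mk_le_mk_of_subset fun Q hQ ↦ (em (Disjoint Q B)).imp (⟨hQ, ·⟩) (⟨hQ, ·⟩)
    _ ≤ #{Q ∈ 𝓡 | Disjoint Q B} + #{Q ∈ 𝓡 | ¬ Disjoint Q B} := mk_union_le _ _
    _ ≤ κ := add_le_of_le hκ hle hmeets

lemma exists_maximal_pairwiseDisjoint (𝓒 : Set (Set α)) (h𝓒 : ∀ Q ∈ 𝓒, Q.Nonempty) :
    ∃ 𝓡 ⊆ 𝓒, 𝓡.PairwiseDisjoint id ∧ ∀ Q ∈ 𝓒, ∃ R ∈ 𝓡, (Q ∩ R).Nonempty := by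
  -- With all radii zero, the Vitali covering lemma just produces a maximal disjoint subfamily.
  obtain ⟨𝓡, hsub, hdisj, hmax⟩ := Vitali.exists_disjoint_subfamily_covering_enlargement
    id 𝓒 0 2 one_lt_two (fun _ _ ↦ le_rfl) 0 (fun _ _ ↦ le_rfl) h𝓒
  exact ⟨𝓡, hsub, hdisj, fun Q hQ ↦ (hmax Q hQ).imp fun R hR ↦ ⟨hR.1, hR.2.1⟩⟩

/-! ### Closure under a finitary operation -/

section FinClosure

variable (op : Set α → Set α) {S E : Set α}

/-- One round of adjoining to `X` the sets `op Z` for all finite `Z ⊆ X`. -/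
def finStep (X : Set α) : Set α := X ∪ ⋃ Z : Finset X, op (Subtype.val '' (Z : Set X))

/-- The closure of `S` under an operation assigning a set to every finite set; the values of `op`
at infinite sets are irrelevant. -/
def finClosure (S : Set α) : Set α := ⋃ n : ℕ, (finStep op)^[n] S

variable {op}

lemma op_subset_finStep {X Z : Set α} (hZX : Z ⊆ X) (hZ : Z.Finite) : op Z ⊆ finStep op X := by
  obtain ⟨Z', hZ'⟩ :=
    (hZ.preimage Subtype.val_injective.injOn (f := ((↑) : X → α))).exists_finset_coe
  have hval : Subtype.val '' (Z' : Set X) = Z := by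
    rw [hZ', Subtype.image_preimage_coe, inter_eq_self_of_subset_right hZX]
  rw [← hval]
  exact (subset_iUnion (fun Z : Finset X ↦ op (Subtype.val '' (Z : Set X))) Z').trans
    subset_union_right

lemma subset_finClosure : S ⊆ finClosure op S :=
  subset_iUnion (fun n ↦ (finStep op)^[n] S) 0

lemma monotone_iterate_finStep : Monotone fun n ↦ (finStep op)^[n] S :=
  monotone_nat_of_le_succ fun n ↦ by
    rw [Function.iterate_succ_apply']
    exact subset_union_left

lemma op_subset_finClosure {Z : Set α} (hZ : Z ⊆ finClosure op S) (hfin : Z.Finite) :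
    op Z ⊆ finClosure op S := by
  lift Z to Finset α using hfin
  obtain ⟨n, hn⟩ :=
    monotone_iterate_finStep.directed_le.exists_mem_subset_of_finset_subset_biUnion hZ
  refine (op_subset_finStep hn Z.finite_toSet).trans ?_
  rw [← Function.iterate_succ_apply' (finStep op) n S]
  exact subset_iUnion (fun n ↦ (finStep op)^[n] S) (n + 1)

lemma finClosure_subset (hS : S ⊆ E) (hop : ∀ Z, op Z ⊆ E) : finClosure op S ⊆ E := by
  refine iUnion_subset fun n ↦ ?_
  induction n with
  | zero => exact hS
  | succ n ih =>
    rw [Function.iterate_succ_apply']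
    exact union_subset ih (iUnion_subset fun _ ↦ hop _)

lemma mk_finClosure_le {κ : Cardinal.{u}} (hκ : ℵ₀ ≤ κ) (hS : #S ≤ κ)
    (hop : ∀ Z, #(op Z) ≤ κ) : #(finClosure op S) ≤ κ := by
  refine mk_iUnion_le_of_le _ hκ (by simpa using hκ) fun n ↦ ?_
  induction n with
  | zero => exact hS
  | succ n ih =>
    rw [Function.iterate_succ_apply']
    have hnew := mk_iUnion_le_of_le
      (fun Z : Finset ((finStep op)^[n] S) ↦ op (Subtype.val '' (Z : Set ((finStep op)^[n] S)))) hκ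
      (lift_le.2 (mk_finset_le hκ ih)) fun _ ↦ hop _
    exact (mk_union_le _ _).trans (add_le_of_le hκ ih hnew)

end FinClosure

/-! ### Initial segments of enumerated sets -/

section InitialSegment

variable {β : Type u}

/-- A well-ordering of `S` of minimal order type, by which `S` is enumerated. -/
noncomputable def enumeration (S : Set β) : S ≃ Iio (#S).ord :=
  Classical.choice <| lift_mk_eq'.1 <| by simp [mk_Iio_ordinal]

/-- The first `o` elements of `S` in its enumeration. -/
def initialSegment (S : Set β) (o : Ordinal.{u}) : Set β :=
  Subtype.val '' {x : S | (enumeration S x : Ordinal.{u}) < o}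

variable {S : Set β} {o : Ordinal.{u}}

lemma initialSegment_subset : initialSegment S o ⊆ S := Subtype.coe_image_subset _ _

lemma initialSegment_mono {p : Ordinal.{u}} (h : o ≤ p) :
    initialSegment S o ⊆ initialSegment S p :=
  image_mono fun _ hx ↦ lt_of_lt_of_le hx h

lemma mk_initialSegment : #(initialSegment S o) = min o.card #S := by
  have hcard : Monotone Ordinal.card.{u} := fun _ _ ↦ Ordinal.card_le_card
  have hpre : {x : S | (enumeration S x : Ordinal.{u}) < o} =
      enumeration S ⁻¹' (Subtype.val ⁻¹' Iio o) := rfl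
  rw [initialSegment, mk_image_eq Subtype.val_injective, hpre, ← lift_inj.{u, u + 1},
    mk_preimage_equiv_lift, ← mk_image_eq Subtype.val_injective, Subtype.image_preimage_coe,
    Iio_inter_Iio, mk_Iio_ordinal, hcard.map_inf, card_ord, inf_comm]
  exact lift_id'.{u, u + 1} _

lemma subset_initialSegment (h : (#S).ord ≤ o) : S ⊆ initialSegment S o :=
  fun x hx ↦ ⟨⟨x, hx⟩, (enumeration S ⟨x, hx⟩).2.trans_le h, rfl⟩

lemma exists_mem_initialSegment_of_mem_add {p : Ordinal.{u}} (hp : p ≠ 0) {x : β}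
    (hx : x ∈ initialSegment S (o + p)) : ∃ d < p, x ∈ initialSegment S (o + (d + 1)) := by
  obtain ⟨x, hx, rfl⟩ := hx
  obtain ⟨d, hd, hxd⟩ := (Ordinal.lt_add_iff hp).1 hx
  exact ⟨d, hd, x, hxd.trans_lt (by gcongr; exact lt_add_one d), rfl⟩

end InitialSegment

/-! ### The filtration -/

section Filtration

/-- `X` is saturated for `𝓠` at `κ` if it absorbs each family `𝓠 Y` of size at most `κ` that is
attached to a nonempty finite `Y ⊆ X`. -/
def IsSaturated (𝓠 : Set α → Set (Set α)) (κ : Cardinal.{u}) (X : Set α) : Prop :=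
  ∀ Y ⊆ X, Y.Finite → Y.Nonempty → #(𝓠 Y) ≤ κ → ⋃₀ 𝓠 Y ⊆ X

/-- `X` is rich for `𝓠` at `θ` if it contains `θ` members of each family `𝓠 Y` that has so many
and is attached to a finite `Y ⊆ X`. -/
def IsRich (𝓠 : Set α → Set (Set α)) (θ : Cardinal.{u}) (X : Set α) : Prop :=
  ∀ Y ⊆ X, Y.Finite → θ ≤ #(𝓠 Y) → θ ≤ #{Q ∈ 𝓠 Y | Q ⊆ X}

/-- The subfamilies of the `𝓠 Y` consisting of the sets that are disjoint from `B`. -/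
def avoiding (𝓠 : Set α → Set (Set α)) (B Y : Set α) : Set (Set α) := {Q ∈ 𝓠 Y | Disjoint Q B}

variable (E : Set α) (𝓠 : Set α → Set (Set α)) (θ : Cardinal.{u})

/-- The operation closing off a stage of the filtration: it adjoins the first `o` members of
`𝓠 Y` and the first `o` members of `𝓠 Y` avoiding `B`, the union of the previous stages. -/
def stageOp (B : Set α) (o : Ordinal.{u}) (Y : Set α) : Set α :=
  ⋃₀ initialSegment (𝓠 Y) o ∪ ⋃₀ initialSegment (avoiding 𝓠 B Y) o

/-- The `a`-th set of an increasing filtration of `E`. A family of size `κ` is exhausted only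
gradually, as the stages run up to `κ.ord`; this keeps unions of stages saturated, even where
their cardinality jumps to a limit cardinal. -/
noncomputable def stage (a : Ordinal.{u}) : Set α :=
  finClosure (stageOp 𝓠 (⋃ b < a, stage b) (θ.ord + (a + 1)))
    ((⋃ b < a, stage b) ∪ initialSegment E (θ.ord + (a + 1)))
termination_by a

/-- The union of all stages before the `a`-th. -/
def stagesBelow (a : Ordinal.{u}) : Set α := ⋃ b < a, stage E 𝓠 θ b

lemma stage_eq (a : Ordinal.{u}) :
    stage E 𝓠 θ a = finClosure (stageOp 𝓠 (stagesBelow E 𝓠 θ a) (θ.ord + (a + 1)))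
      (stagesBelow E 𝓠 θ a ∪ initialSegment E (θ.ord + (a + 1))) := by
  rw [stage]
  rfl

variable {E 𝓠 θ} {a b : Ordinal.{u}} {Y : Set α}

lemma mem_stagesBelow {x : α} : x ∈ stagesBelow E 𝓠 θ a ↔ ∃ b < a, x ∈ stage E 𝓠 θ b := by
  simp [stagesBelow]

lemma initialSegment_subset_stage : initialSegment E (θ.ord + (a + 1)) ⊆ stage E 𝓠 θ a := by
  rw [stage_eq]
  exact subset_union_right.trans subset_finClosure

lemma stagesBelow_subset_stage : stagesBelow E 𝓠 θ a ⊆ stage E 𝓠 θ a := by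
  rw [stage_eq]
  exact subset_union_left.trans subset_finClosure

lemma stage_subset_stagesBelow (h : b < a) : stage E 𝓠 θ b ⊆ stagesBelow E 𝓠 θ a :=
  fun _ hx ↦ mem_stagesBelow.2 ⟨b, h, hx⟩

lemma stage_mono : Monotone (stage E 𝓠 θ) := by
  intro b a h
  rcases h.eq_or_lt with rfl | h
  · rfl
  · exact (stage_subset_stagesBelow h).trans stagesBelow_subset_stage

lemma stageOp_subset_stage (hY : Y ⊆ stage E 𝓠 θ a) (hfin : Y.Finite) :
    stageOp 𝓠 (stagesBelow E 𝓠 θ a) (θ.ord + (a + 1)) Y ⊆ stage E 𝓠 θ a := by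
  rw [stage_eq] at hY ⊢
  exact op_subset_finClosure hY hfin

lemma stage_subset (h𝓠 : ∀ Y, ∀ Q ∈ 𝓠 Y, Q ⊆ E) : stage E 𝓠 θ a ⊆ E := by
  induction a using WellFoundedLT.induction with
  | ind a ih =>
    rw [stage_eq]
    refine finClosure_subset
      (union_subset (iUnion₂_subset ih) initialSegment_subset) fun Y ↦ union_subset ?_ ?_
    · exact sUnion_subset fun Q hQ ↦ h𝓠 Y Q (initialSegment_subset hQ)
    · exact sUnion_subset fun Q hQ ↦ h𝓠 Y Q (initialSegment_subset hQ).1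

lemma mk_stageOp_le (hfin : ∀ Y, ∀ Q ∈ 𝓠 Y, Q.Finite) {B : Set α} {o : Ordinal.{u}}
    (ho : ℵ₀ ≤ o.card) : #(stageOp 𝓠 B o Y) ≤ o.card := by
  refine (mk_union_le _ _).trans (add_le_of_le ho ?_ ?_)
  · exact mk_sUnion_le_of_finite ho (mk_initialSegment.trans_le (min_le_left _ _))
      fun Q hQ ↦ hfin Y Q (initialSegment_subset hQ)
  · exact mk_sUnion_le_of_finite ho (mk_initialSegment.trans_le (min_le_left _ _))
      fun Q hQ ↦ hfin Y Q (initialSegment_subset hQ).1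

lemma card_ord_add_add_one (hθ : ℵ₀ ≤ θ) : (θ.ord + (a + 1)).card = θ + a.card := by
  rw [Ordinal.card_add, Ordinal.card_add_one, card_ord, add_comm a.card, ← add_assoc,
    add_one_eq hθ]

lemma mk_stagesBelow_le_of_forall (hθ : ℵ₀ ≤ θ) (h : ∀ b < a, #(stage E 𝓠 θ b) ≤ θ + b.card) :
    #(stagesBelow E 𝓠 θ a) ≤ θ + a.card :=
  mk_biUnion_le_of_le (self_le_add_left _ _) (hθ.trans (self_le_add_right _ _)) _ fun b hb ↦
    (h b hb).trans (by gcongr)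

lemma mk_stage_le (hθ : ℵ₀ ≤ θ) (hfin : ∀ Y, ∀ Q ∈ 𝓠 Y, Q.Finite) :
    #(stage E 𝓠 θ a) ≤ θ + a.card := by
  induction a using WellFoundedLT.induction with
  | ind a ih =>
    have hκ : ℵ₀ ≤ θ + a.card := hθ.trans (self_le_add_right _ _)
    rw [stage_eq]
    refine mk_finClosure_le hκ ((mk_union_le _ _).trans (add_le_of_le hκ ?_ ?_)) fun Y ↦ ?_
    · exact mk_stagesBelow_le_of_forall hθ ih
    · rw [mk_initialSegment, card_ord_add_add_one hθ]
      exact min_le_left _ _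
    · rw [← card_ord_add_add_one hθ] at hκ ⊢
      exact mk_stageOp_le hfin hκ

lemma mk_stagesBelow_le (hθ : ℵ₀ ≤ θ) (hfin : ∀ Y, ∀ Q ∈ 𝓠 Y, Q.Finite) :
    #(stagesBelow E 𝓠 θ a) ≤ θ + a.card :=
  mk_stagesBelow_le_of_forall hθ fun _ _ ↦ mk_stage_le hθ hfin

lemma ord_add_card_le : (θ + a.card).ord ≤ θ.ord + a := by
  rw [← card_ord θ, ← Ordinal.card_add, card_ord]
  exact ord_card_le _

lemma isSaturated_stage : IsSaturated 𝓠 (θ + a.card) (stage E 𝓠 θ a) := by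
  intro Y hY hfin _ hcard
  have hexhaust : 𝓠 Y ⊆ initialSegment (𝓠 Y) (θ.ord + (a + 1)) :=
    subset_initialSegment ((ord_le_ord.2 hcard).trans (ord_add_card_le.trans
      (by gcongr; exact (lt_add_one a).le)))
  exact (sUnion_subset_sUnion hexhaust).trans
    (subset_union_left.trans (stageOp_subset_stage hY hfin))

lemma exists_subset_stage_of_subset_stagesBelow (hY : Y ⊆ stagesBelow E 𝓠 θ a) (hfin : Y.Finite)
    (hne : Y.Nonempty) : ∃ b < a, Y ⊆ stage E 𝓠 θ b := by
  lift Y to Finset α using hfin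
  obtain ⟨y, hy⟩ := hne
  obtain ⟨b, hb, -⟩ := mem_stagesBelow.1 (hY hy)
  exact DirectedOn.exists_mem_subset_of_finset_subset_biUnion (c := Iio a) ⟨b, hb⟩
    (fun c hc d hd ↦ ⟨max c d, mem_Iio.2 (max_lt hc hd), stage_mono (le_max_left c d),
      stage_mono (le_max_right c d)⟩) hY

lemma isSaturated_stagesBelow :
    IsSaturated 𝓠 (θ + a.card) (stagesBelow E 𝓠 θ a) := by
  rintro Y hY hfin hne hcard x ⟨Q, hQ, hxQ⟩
  obtain ⟨b, hb, hYb⟩ := exists_subset_stage_of_subset_stagesBelow hY hfin hne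
  have hQa : Q ∈ initialSegment (𝓠 Y) (θ.ord + a) :=
    subset_initialSegment ((ord_le_ord.2 hcard).trans ord_add_card_le) hQ
  obtain ⟨d, hd, hQd⟩ := exists_mem_initialSegment_of_mem_add (pos_of_gt hb).ne' hQa
  have hQmax : Q ∈ initialSegment (𝓠 Y) (θ.ord + (max b d + 1)) :=
    initialSegment_mono (by gcongr; exact le_max_right b d) hQd
  refine stage_subset_stagesBelow (max_lt hb hd) ?_
  exact stageOp_subset_stage (hYb.trans (stage_mono (le_max_left b d))) hfin
    (Or.inl ⟨Q, hQmax, hxQ⟩)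

lemma le_mk_setOf_subset {𝓡 : Set (Set α)} {X : Set α} (h𝓡 : θ ≤ #𝓡)
    (hX : ⋃₀ initialSegment 𝓡 (θ.ord + (a + 1)) ⊆ X) : θ ≤ #{Q ∈ 𝓡 | Q ⊆ X} := by
  have hθ : θ ≤ (θ.ord + (a + 1)).card := by
    rw [Ordinal.card_add, card_ord]
    exact self_le_add_right _ _
  calc θ ≤ #(initialSegment 𝓡 (θ.ord + (a + 1))) := mk_initialSegment ▸ le_min hθ h𝓡
    _ ≤ #{Q ∈ 𝓡 | Q ⊆ X} := mk_le_mk_of_subset fun Q hQ ↦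
      ⟨initialSegment_subset hQ, (subset_sUnion_of_mem hQ).trans hX⟩

lemma isRich_stage : IsRich 𝓠 θ (stage E 𝓠 θ a) := fun _ hY hfin h ↦
  le_mk_setOf_subset h (subset_union_left.trans (stageOp_subset_stage hY hfin))

lemma isRich_avoiding_stage :
    IsRich (avoiding 𝓠 (stagesBelow E 𝓠 θ a)) θ (stage E 𝓠 θ a) := fun _ hY hfin h ↦
  le_mk_setOf_subset h (subset_union_right.trans (stageOp_subset_stage hY hfin))

variable (E 𝓠 θ) in
/-- The part of the `a`-th stage outside all earlier stages; the nonempty layers partition `E`. -/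
def layer (a : Ordinal.{u}) : Set α := stage E 𝓠 θ a \ stagesBelow E 𝓠 θ a

lemma pairwise_disjoint_layer : Pairwise (Disjoint on layer E 𝓠 θ) :=
  (pairwise_disjoint_on _).2 fun _ _ hab ↦
    disjoint_left.2 fun _ hxa hxb ↦ hxb.2 (stage_subset_stagesBelow hab hxa.1)

lemma exists_mem_layer {x : α} (hx : x ∈ E) : ∃ a < (#E).ord, x ∈ layer E 𝓠 θ a := by
  set d : Ordinal.{u} := (enumeration E ⟨x, hx⟩ : Ordinal.{u})
  have hxd : x ∈ stage E 𝓠 θ d :=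
    initialSegment_subset_stage ⟨⟨x, hx⟩, (lt_add_one d).trans_le le_add_self, rfl⟩
  obtain ⟨a, had, hmin⟩ := exists_minimal_le_of_wellFoundedLT (x ∈ stage E 𝓠 θ ·) d hxd
  refine ⟨a, had.trans_lt (enumeration E ⟨x, hx⟩).2, hmin.prop, fun hbelow ↦ ?_⟩
  obtain ⟨b, hba, hxb⟩ := mem_stagesBelow.1 hbelow
  exact hmin.not_prop_of_lt hba hxb

end Filtration

/-! ### Circuits and cocircuits -/

section Matroid

variable {M : Matroid α} {θ κ : Cardinal.{u}} {A B C D X Y : Set α} {e f : α}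

lemma exists_isCocircuit_subset (hD : D.Nonempty) (hDE : D ⊆ M.E)
    (h : ∀ C, M.IsCircuit C → ∀ e, C ∩ D ≠ {e}) : ∃ K ⊆ D, M.IsCocircuit K := by
  refine Matroid.Dep.exists_isCircuit_subset (M := M✶) ?_
  rw [← Matroid.not_indep_iff (M := M✶) hDE]
  intro hindep
  obtain ⟨e, he⟩ := hD
  obtain ⟨C, hC, hCD⟩ := hindep.exists_isCocircuit_inter_eq_mem he
  exact h C (Matroid.dual_isCocircuit_iff.1 hC) e hCD

lemma exists_isCircuit_inter_eq_pair (hD : M.IsCocircuit D) (he : e ∈ D) (hf : f ∈ D)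
    (hef : e ≠ f) : ∃ C, M.IsCircuit C ∧ C ∩ D = {e, f} := by
  obtain ⟨C, hC, hCf⟩ := (hD.isCircuit.sdiff_singleton_indep he).exists_isCocircuit_inter_eq_mem
    (e := f) ⟨hf, hef.symm⟩
  rw [Matroid.dual_isCocircuit_iff] at hC
  refine ⟨C, hC, ?_⟩
  rw [← inter_sdiff_assoc] at hCf
  have heC : e ∈ C ∩ D := by
    by_contra heC
    exact hC.inter_isCocircuit_ne_singleton hD (sdiff_singleton_eq_self heC ▸ hCf)
  rw [← insert_sdiff_self_of_mem heC, hCf]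

variable (M) in
/-- The sets `Q` that complete `Y` to a circuit. -/
def completions (Y : Set α) : Set (Set α) :=
  {Q | Q.Nonempty ∧ Disjoint Q Y ∧ M.IsCircuit (Q ∪ Y)}

lemma sdiff_mem_completions (hC : M.IsCircuit C) (hCX : ¬ C ⊆ X) :
    C \ X ∈ completions M (C ∩ X) :=
  ⟨sdiff_nonempty.2 hCX, disjoint_sdiff_inter, by rwa [sdiff_union_inter]⟩

variable (M) in
/-- A maximal disjoint family of sets completing `Y` to a circuit. -/
noncomputable def packing (Y : Set α) : Set (Set α) :=
  (exists_maximal_pairwiseDisjoint (completions M Y) fun _ hQ ↦ hQ.1).choose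

lemma packing_subset : packing M Y ⊆ completions M Y :=
  (exists_maximal_pairwiseDisjoint (completions M Y) fun _ hQ ↦ hQ.1).choose_spec.1

lemma pairwiseDisjoint_packing : (packing M Y).PairwiseDisjoint id :=
  (exists_maximal_pairwiseDisjoint (completions M Y) fun _ hQ ↦ hQ.1).choose_spec.2.1

lemma exists_mem_packing_inter_nonempty {Q : Set α} (hQ : Q ∈ completions M Y) :
    ∃ R ∈ packing M Y, (Q ∩ R).Nonempty :=
  (exists_maximal_pairwiseDisjoint (completions M Y) fun _ hQ ↦ hQ.1).choose_spec.2.2 Q hQ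

lemma subset_ground_of_mem_packing {Q : Set α} (hQ : Q ∈ packing M Y) : Q ⊆ M.E :=
  subset_union_left.trans (packing_subset hQ).2.2.subset_ground

lemma finite_of_mem_packing [M.Finitary] {Q : Set α} (hQ : Q ∈ packing M Y) : Q.Finite :=
  (packing_subset hQ).2.2.finite.subset subset_union_left

lemma lt_mk_packing [M.Finitary] (hX : IsSaturated (packing M) κ X) (hC : M.IsCircuit C)
    (hne : (C ∩ X).Nonempty) (hCX : ¬ C ⊆ X) : κ < #(packing M (C ∩ X)) := by
  by_contra! hle
  obtain ⟨R, hR, x, hxC, hxR⟩ := exists_mem_packing_inter_nonempty (sdiff_mem_completions hC hCX)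
  exact hxC.2 (hX _ inter_subset_right (hC.finite.inter_of_left X) hne hle ⟨R, hR, hxR⟩)

lemma subset_of_isCocircuit_of_isSaturated [M.Finitary] (hX : IsSaturated (packing M) κ X)
    (hD : M.IsCocircuit D) (hDκ : #D ≤ κ) (hDX : (D ∩ X).Nonempty) : D ⊆ X := by
  obtain ⟨e, heD, heX⟩ := hDX
  by_contra hsub
  obtain ⟨f, hfD, hfX⟩ := not_subset.1 hsub
  obtain ⟨C, hC, hCD⟩ := exists_isCircuit_inter_eq_pair hD heD hfD fun h ↦ hfX (h ▸ heX)
  have heC : e ∈ C := (hCD.symm.subset (Or.inl rfl)).1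
  have hfC : f ∈ C := (hCD.symm.subset (Or.inr rfl)).1
  obtain ⟨Q, hQ, hQD⟩ := exists_disjoint_of_mk_lt pairwiseDisjoint_packing
    (hDκ.trans_lt (lt_mk_packing hX hC ⟨e, heC, heX⟩ fun h ↦ hfX (h hfC)))
  refine (packing_subset hQ).2.2.inter_isCocircuit_ne_singleton hD (e := e) ?_
  rw [union_inter_distrib_right, hQD.inter_eq, empty_union, inter_right_comm, hCD,
    insert_inter_of_mem heX, singleton_inter_eq_empty.2 hfX, insert_empty_eq]

lemma exists_isCircuit_subset_inter_eq [M.Finitary] (hsat : IsSaturated (packing M) κ A)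
    (hrich : IsRich (packing M) θ A) (hθκ : θ ≤ κ) (hDA : D ⊆ A) (hD : #D < θ)
    (hC : M.IsCircuit C) (hCD : C ∩ D = {e}) : ∃ C' ⊆ A, M.IsCircuit C' ∧ C' ∩ D = {e} := by
  by_cases hCA : C ⊆ A
  · exact ⟨C, hCA, hC, hCD⟩
  have he : e ∈ C ∩ D := hCD.symm.subset rfl
  have hmany := hrich _ inter_subset_right (hC.finite.inter_of_left A)
    (hθκ.trans (lt_mk_packing hsat hC ⟨e, he.1, hDA he.2⟩ hCA).le)
  obtain ⟨Q, ⟨hQ, hQA⟩, hQD⟩ := exists_disjoint_of_mk_lt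
    (pairwiseDisjoint_packing.subset (sep_subset _ _)) (hD.trans_le hmany)
  refine ⟨Q ∪ C ∩ A, union_subset hQA inter_subset_right, (packing_subset hQ).2.2, ?_⟩
  rw [union_inter_distrib_right, hQD.inter_eq, empty_union, inter_assoc,
    inter_eq_self_of_subset_right hDA, hCD]

lemma exists_isCircuit_inter_ssubset [M.Finitary] (hκ : ℵ₀ ≤ κ)
    (hsat : IsSaturated (packing M) κ B) (hB : #B ≤ κ)
    (hrich : IsRich (avoiding (packing M) B) θ A) (hθκ : θ ≤ κ) (hDB : Disjoint D B) (hD : #D < θ)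
    (hC : M.IsCircuit C) (hCA : C ⊆ A) (hCD : C ∩ D = {e}) (hCB : (C ∩ B).Nonempty) :
    ∃ C' ⊆ A, M.IsCircuit C' ∧ C' ∩ D = {e} ∧ C' ∩ B ⊂ C ∩ B := by
  have he : e ∈ C ∩ D := hCD.symm.subset rfl
  have heB : e ∉ B := disjoint_left.1 hDB he.2
  have hlt : κ < #(packing M (C ∩ B)) := lt_mk_packing hsat hC hCB fun h ↦ heB (h he.1)
  have hmany := hrich (C ∩ B) (inter_subset_left.trans hCA) (hC.finite.inter_of_left B)
    (hθκ.trans (lt_mk_setOf_disjoint pairwiseDisjoint_packing hκ hB hlt).le)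
  obtain ⟨Q, ⟨⟨hQ, hQB⟩, hQA⟩, hQD⟩ := exists_disjoint_of_mk_lt
    (pairwiseDisjoint_packing.subset ((sep_subset _ _).trans (sep_subset _ _)))
    (hD.trans_le hmany)
  obtain ⟨y, hyC, hyB⟩ := hCB
  -- Eliminating `y` between `C` and the circuit `Q ∪ C ∩ B` leaves fewer elements of `B`.
  obtain ⟨C', hC'sub, hC', heC'⟩ := hC.strong_elimination (packing_subset hQ).2.2 hyC
    (Or.inr ⟨hyC, hyB⟩) he.1 (fun h ↦ h.elim (disjoint_right.1 hQD he.2) fun h ↦ heB h.2)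
  have hC'QC : ∀ x ∈ C', x ∉ Q → x ∈ C := fun x hx hxQ ↦
    (hC'sub hx).1.elim id fun h ↦ h.elim (absurd · hxQ) And.left
  refine ⟨C', fun x hx ↦ ?_, hC', Subset.antisymm ?_ ?_, ?_⟩
  · by_cases hxQ : x ∈ Q
    · exact hQA hxQ
    · exact hCA (hC'QC x hx hxQ)
  · exact fun x hx ↦ hCD.subset ⟨hC'QC x hx.1 (disjoint_right.1 hQD hx.2), hx.2⟩
  · exact singleton_subset_iff.2 ⟨heC', he.2⟩
  · have hsub : C' ∩ B ⊆ C ∩ B := fun x hx ↦ ⟨hC'QC x hx.1 (disjoint_right.1 hQB hx.2), hx.2⟩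
    exact (ssubset_iff_of_subset hsub).2 ⟨y, ⟨hyC, hyB⟩, fun h ↦ (hC'sub h.1).2 rfl⟩

lemma exists_isCircuit_subset_sdiff_inter_eq [M.Finitary] (hκ : ℵ₀ ≤ κ)
    (hsat : IsSaturated (packing M) κ B) (hB : #B ≤ κ)
    (hrich : IsRich (avoiding (packing M) B) θ A) (hθκ : θ ≤ κ) (hDB : Disjoint D B) (hD : #D < θ)
    (hC : M.IsCircuit C) (hCA : C ⊆ A) (hCD : C ∩ D = {e}) :
    ∃ C' ⊆ A \ B, M.IsCircuit C' ∧ C' ∩ D = {e} := by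
  induction hn : (C ∩ B).ncard using Nat.strong_induction_on generalizing C with
  | _ n ih =>
    rcases (C ∩ B).eq_empty_or_nonempty with hCB | hCB
    · exact ⟨C, subset_sdiff.2 ⟨hCA, disjoint_iff_inter_eq_empty.2 hCB⟩, hC, hCD⟩
    · obtain ⟨C', hC'A, hC', hC'D, hlt⟩ := exists_isCircuit_inter_ssubset hκ hsat hB hrich hθκ
        hDB hD hC hCA hCD hCB
      exact ih _ (hn ▸ ncard_lt_ncard hlt (hC.finite.inter_of_left B)) hC' hC'A hC'D rfl

/-! ### Faithful partitions -/

variable (M θ) in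
/-- `F` is `θ`-cocircuit faithful in `M`: the small cocircuits of `M ↾ F` are cocircuits of `M`. -/
def CocircuitFaithful (F : Set α) : Prop :=
  ∀ D, (M ↾ F).IsCocircuit D → #D < θ → M.IsCocircuit D

variable (M θ) in
/-- A `θ`-cocircuit faithful partition of `M`, without the bound on the size of the parts, which
is only reached at the end of an induction. -/
structure IsFaithfulPartition (P : Set (Set α)) : Prop where
  sUnion_eq : ⋃₀ P = M.E
  pairwise_disjoint : P.Pairwise Disjoint
  faithful : ∀ F ∈ P, CocircuitFaithful M θ F
  exists_superset : ∀ D, M.IsCocircuit D → #D ≤ θ → ∃ F ∈ P, D ⊆ F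

variable {F G : Set α} {P : Set (Set α)}

lemma exists_restrict_isCocircuit_subset (hF : F ⊆ M.E) (hD : M.IsCocircuit D) (hDF : D ⊆ F) :
    ∃ K ⊆ D, (M ↾ F).IsCocircuit K :=
  exists_isCocircuit_subset hD.nonempty hDF fun _ hC _ ↦
    ((Matroid.restrict_isCircuit_iff hF).1 hC).1.inter_isCocircuit_ne_singleton hD

lemma cocircuitFaithful_of_forall_exists_isCircuit (hF : F ⊆ M.E)
    (h : ∀ D ⊆ F, #D < θ → ∀ C e, M.IsCircuit C → C ∩ D = {e} →
      ∃ C' ⊆ F, M.IsCircuit C' ∧ C' ∩ D = {e}) : CocircuitFaithful M θ F := by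
  intro D hD hDθ
  have hDF : D ⊆ F := hD.subset_ground
  obtain ⟨K, hKD, hK⟩ := exists_isCocircuit_subset hD.nonempty (hDF.trans hF) fun C hC e hCD ↦ by
    obtain ⟨C', hC'F, hC', hC'D⟩ := h D hDF hDθ C e hC hCD
    exact (hC'.isCircuit_restrict_of_subset hC'F).inter_isCocircuit_ne_singleton hD hC'D
  obtain ⟨L, hLK, hL⟩ := exists_restrict_isCocircuit_subset hF hK (hKD.trans hDF)
  have hLD : L = D := hL.isCircuit.eq_of_subset_isCircuit hD.isCircuit (hLK.trans hKD)
  rwa [hKD.antisymm (hLD ▸ hLK)] at hK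

lemma cocircuitFaithful_layer [M.Finitary] (hθ : ℵ₀ ≤ θ) (a : Ordinal.{u}) :
    CocircuitFaithful M θ (layer M.E (packing M) θ a) := by
  have hθκ : θ ≤ θ + a.card := self_le_add_right _ _
  refine cocircuitFaithful_of_forall_exists_isCircuit
    (sdiff_subset.trans (stage_subset fun _ _ ↦ subset_ground_of_mem_packing)) ?_
  intro D hDF hD C e hC hCD
  obtain ⟨hDA, hDB⟩ := subset_sdiff.1 hDF
  obtain ⟨C₁, hC₁A, hC₁, hC₁D⟩ :=
    exists_isCircuit_subset_inter_eq isSaturated_stage isRich_stage hθκ hDA hD hC hCD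
  exact exists_isCircuit_subset_sdiff_inter_eq (hθ.trans hθκ) isSaturated_stagesBelow
    (mk_stagesBelow_le hθ fun _ _ ↦ finite_of_mem_packing) isRich_avoiding_stage hθκ hDB hD
    hC₁ hC₁A hC₁D

lemma subset_layer_of_isCocircuit [M.Finitary] {a : Ordinal.{u}} (hD : M.IsCocircuit D)
    (hDθ : #D ≤ θ) (heD : e ∈ D) (he : e ∈ layer M.E (packing M) θ a) :
    D ⊆ layer M.E (packing M) θ a := by
  have hDκ : #D ≤ θ + a.card := hDθ.trans (self_le_add_right _ _)
  refine subset_sdiff.2 ⟨subset_of_isCocircuit_of_isSaturated isSaturated_stage hD hDκ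
    ⟨e, heD, he.1⟩, ?_⟩
  by_contra hmeets
  exact he.2 (subset_of_isCocircuit_of_isSaturated isSaturated_stagesBelow hD hDκ
    (not_disjoint_iff_nonempty_inter.1 hmeets) heD)

lemma exists_isFaithfulPartition_mk_lt (M : Matroid α) [M.Finitary] (hθ : ℵ₀ ≤ θ)
    (hE : θ < #M.E) : ∃ P, IsFaithfulPartition M θ P ∧ ∀ F ∈ P, #F < #M.E := by
  refine ⟨layer M.E (packing M) θ '' Iio (#M.E).ord, ⟨Subset.antisymm ?_ ?_, ?_, ?_, ?_⟩, ?_⟩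
  · rintro x ⟨_, ⟨a, -, rfl⟩, hx⟩
    exact stage_subset (fun _ _ ↦ subset_ground_of_mem_packing) hx.1
  · intro x hx
    obtain ⟨a, ha, hxa⟩ := exists_mem_layer hx
    exact ⟨_, mem_image_of_mem _ ha, hxa⟩
  · exact pairwise_disjoint_layer.range_pairwise.mono (image_subset_range _ _)
  · rintro _ ⟨a, -, rfl⟩
    exact cocircuitFaithful_layer hθ a
  · intro D hD hDθ
    obtain ⟨e, he⟩ := hD.nonempty
    obtain ⟨a, ha, hea⟩ := exists_mem_layer (hD.subset_ground he)
    exact ⟨_, mem_image_of_mem _ ha, subset_layer_of_isCocircuit hD hDθ he hea⟩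
  · rintro _ ⟨a, ha, rfl⟩
    calc #(layer M.E (packing M) θ a)
        ≤ #(stage M.E (packing M) θ a) := mk_le_mk_of_subset sdiff_subset
      _ ≤ θ + a.card := mk_stage_le hθ fun _ _ ↦ finite_of_mem_packing
      _ < #M.E := add_lt_of_lt (hθ.trans hE.le) hE (lt_ord.1 ha)

lemma isFaithfulPartition_singleton_ground (M : Matroid α) (θ : Cardinal.{u}) :
    IsFaithfulPartition M θ {M.E} where
  sUnion_eq := sUnion_singleton _
  pairwise_disjoint := pairwise_singleton _ _
  faithful := by
    rintro F rfl D hD -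
    rwa [Matroid.restrict_ground_eq_self] at hD
  exists_superset D hD _ := ⟨M.E, rfl, hD.subset_ground⟩

lemma CocircuitFaithful.trans (hF : CocircuitFaithful M κ F)
    (hG : CocircuitFaithful (M ↾ F) θ G) (hGF : G ⊆ F) (hθκ : θ ≤ κ) :
    CocircuitFaithful M θ G := fun D hD hDθ ↦
  hF D (hG D (by rwa [Matroid.restrict_restrict_eq _ hGF]) hDθ) (hDθ.trans_le hθκ)

lemma CocircuitFaithful.isCocircuit_restrict (h : CocircuitFaithful M κ F) (hF : F ⊆ M.E)
    (hD : M.IsCocircuit D) (hDF : D ⊆ F) (hDκ : #D < κ) : (M ↾ F).IsCocircuit D := by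
  obtain ⟨K, hKD, hK⟩ := exists_restrict_isCocircuit_subset hF hD hDF
  have hKM := h K hK ((mk_le_mk_of_subset hKD).trans_lt hDκ)
  rwa [← hKM.isCircuit.eq_of_subset_isCircuit hD.isCircuit hKD]

lemma IsFaithfulPartition.refine (hP : IsFaithfulPartition M κ P) (hθκ : θ < κ)
    {R : P → Set (Set α)} (hR : ∀ F : P, IsFaithfulPartition (M ↾ F.1) θ (R F)) :
    IsFaithfulPartition M θ (⋃ F, R F) where
  sUnion_eq := by
    rw [sUnion_iUnion, ← hP.sUnion_eq, sUnion_eq_iUnion]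
    exact iUnion_congr fun F ↦ (hR F).sUnion_eq
  pairwise_disjoint := by
    have hsub : ∀ F : P, ∀ G ∈ R F, G ⊆ F := fun F G hG ↦
      (subset_sUnion_of_mem hG).trans (hR F).sUnion_eq.subset
    intro G hG G' hG' hne
    obtain ⟨F, hGF⟩ := mem_iUnion.1 hG
    obtain ⟨F', hGF'⟩ := mem_iUnion.1 hG'
    rcases eq_or_ne F F' with rfl | hFF'
    · exact (hR F).pairwise_disjoint hGF hGF' hne
    · exact (hP.pairwise_disjoint F.2 F'.2 (Subtype.coe_ne_coe.2 hFF')).mono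
        (hsub F G hGF) (hsub F' G' hGF')
  faithful G hG := by
    obtain ⟨F, hGF⟩ := mem_iUnion.1 hG
    exact (hP.faithful F F.2).trans ((hR F).faithful G hGF)
      ((subset_sUnion_of_mem hGF).trans (hR F).sUnion_eq.subset) hθκ.le
  exists_superset D hD hDθ := by
    obtain ⟨F, hF, hDF⟩ := hP.exists_superset D hD (hDθ.trans hθκ.le)
    have hDF' := (hP.faithful F hF).isCocircuit_restrict
      (hP.sUnion_eq ▸ subset_sUnion_of_mem hF) hD hDF (hDθ.trans_lt hθκ)
    obtain ⟨G, hG, hDG⟩ := (hR ⟨F, hF⟩).exists_superset D hDF' hDθ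
    exact ⟨G, mem_iUnion.2 ⟨_, hG⟩, hDG⟩

theorem exists_isFaithfulPartition_mk_le (M : Matroid α) [M.Finitary] (hθ : ℵ₀ ≤ θ) :
    ∃ P, IsFaithfulPartition M θ P ∧ ∀ F ∈ P, #F ≤ θ := by
  induction hμ : #M.E using WellFoundedLT.induction generalizing M with
  | ind μ ih =>
    subst hμ
    rcases le_or_gt #M.E θ with hle | hlt
    · exact ⟨{M.E}, isFaithfulPartition_singleton_ground M θ, by simpa using hle⟩
    rcases le_or_gt #M.E (Order.succ θ) with hle | hlt'
    · obtain ⟨P, hP, hmk⟩ := exists_isFaithfulPartition_mk_lt M hθ hlt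
      exact ⟨P, hP, fun F hF ↦ Order.lt_succ_iff.1 ((hmk F hF).trans_le hle)⟩
    · obtain ⟨P, hP, hmk⟩ :=
        exists_isFaithfulPartition_mk_lt M (hθ.trans (Order.le_succ θ)) hlt'
      choose R hR hRmk using fun F : P ↦ ih #F (hmk F F.2) (M ↾ F.1) rfl
      refine ⟨⋃ F, R F, hP.refine (Order.lt_succ θ) hR, fun G hG ↦ ?_⟩
      obtain ⟨F, hGF⟩ := mem_iUnion.1 hG
      exact hRmk F G hGF

end Matroid

end Laviolette

/-- Laviolette's theorem for finitary matroids: for every infinite cardinal `lam`, every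
finitary matroid admits a `lam`-cocircuit faithful partition: a partition `P` of the
ground set such that every part has cardinality at most `lam`, every cocircuit of the
restriction to a part that has cardinality less than `lam` is a cocircuit of `M`, and
every cocircuit of `M` of cardinality at most `lam` is contained in some part. -/
theorem laviolette (lam : Cardinal.{u}) (hlam : Cardinal.aleph0 ≤ lam)
    (M : Matroid α) [M.Finitary] :
    ∃ P : Set (Set α),
      ⋃₀ P = M.E ∧ P.Pairwise Disjoint ∧
      (∀ F ∈ P, Cardinal.mk F ≤ lam) ∧
      (∀ F ∈ P, ∀ D : Set α, (M.restrict F)✶.IsMinDepCircuit D → Cardinal.mk D < lam →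
        M✶.IsMinDepCircuit D) ∧
      (∀ D : Set α, M✶.IsMinDepCircuit D → Cardinal.mk D ≤ lam → ∃ F ∈ P, D ⊆ F) := by
  obtain ⟨P, hP, hmk⟩ := Laviolette.exists_isFaithfulPartition_mk_le M hlam
  exact ⟨P, hP.sUnion_eq, hP.pairwise_disjoint, hmk, hP.faithful, hP.exists_superset⟩
end

section
/- (Farkas lemma for finitary binary oriented matroids.) Let (M, O, O*) be a finitary binary oriented matroid with ground set E. Then for every e ∈ E, exactly one of the following holds: there is a positive signed circuit C ∈ O with e ∈ dom(C), or there is a positive signed cocircuit D ∈ O* with e ∈ dom(D). In particular there is at least one of the two, and never both. -/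
open Set Function

variable {α : Type*}

/-- A circuit of a matroid `M`: a minimal dependent set. A cocircuit of `M` is a
circuit of the dual matroid `M✶`. -/
def Matroid.IsCircuitSet (M : Matroid α) (C : Set α) : Prop := Minimal M.Dep C

/-- A signed set, encoded as an integer-valued function taking values `1` or `-1` on its
support (which plays the role of the domain of the signed set) and `0` elsewhere. -/
def IsSignedSet (g : α → ℤ) : Prop := ∀ e ∈ Function.support g, g e = 1 ∨ g e = -1

/-- A signed set is positive if it is constantly `+1` on its domain. -/
def IsPositive (g : α → ℤ) : Prop := ∀ e ∈ Function.support g, g e = 1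

/-- `O` is a signature of the set-system `𝒞`: it consists of exactly two signings of each
member of `𝒞`, these two being negatives of each other, and nothing else. -/
structure IsSignature (𝒞 : Set (Set α)) (O : Set (α → ℤ)) : Prop where
  signed : ∀ g ∈ O, IsSignedSet g
  dom_mem : ∀ g ∈ O, Function.support g ∈ 𝒞
  exists_signing : ∀ C ∈ 𝒞, ∃ g ∈ O, Function.support g = C
  neg_mem : ∀ g ∈ O, -g ∈ O
  eq_or_eq_neg : ∀ g ∈ O, ∀ h ∈ O, Function.support g = Function.support h → h = g ∨ h = -g

/-- `(M, O, Ostar)` is an oriented matroid: `O` is a signature of the circuits of `M`,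
`Ostar` is a signature of the cocircuits of `M`, and orthogonality holds: whenever the
domains of `C ∈ O` and `D ∈ Ostar` intersect, the restriction of `C` to the (finite)
intersection is neither equal to, nor the negative of, the restriction of `D`. -/
structure IsOrientation (M : Matroid α) (O Ostar : Set (α → ℤ)) : Prop where
  circuit_signature : IsSignature {C | M.IsCircuitSet C} O
  cocircuit_signature : IsSignature {D | M✶.IsCircuitSet D} Ostar
  orthogonality : ∀ C ∈ O, ∀ D ∈ Ostar,
    (Function.support C ∩ Function.support D).Nonempty →
      (¬ ∀ e ∈ Function.support C ∩ Function.support D, C e = D e) ∧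
      (¬ ∀ e ∈ Function.support C ∩ Function.support D, C e = - D e)

/-- The oriented matroid is binary: `∑_{e ∈ dom C ∩ dom D} C(e)·D(e) = 0` for every
signed circuit `C ∈ O` and signed cocircuit `D ∈ Ostar` (a finite sum, since circuits
of a finitary matroid are finite). -/
def IsBinaryOrientation (O Ostar : Set (α → ℤ)) : Prop :=
  ∀ C ∈ O, ∀ D ∈ Ostar, ∑ᶠ e, C e * D e = 0

/-- The oriented matroid is balanced: in every signed cocircuit, the set of positive
elements and the set of negative elements have the same cardinality. -/
def IsBalanced (Ostar : Set (α → ℤ)) : Prop :=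
  ∀ D ∈ Ostar, Cardinal.mk {e : α | D e = 1} = Cardinal.mk {e : α | D e = -1}

/-! The substance is to find a positive signed cocircuit through `e` when there is no positive
signed circuit through `e`. Then every signed circuit `C` with `C e = 1` has a nonempty, finite
negative part, so some set `T` meets all these negative parts and is minimal with this property.
Minty's colouring lemma produces, for each finite `F`, a signed cocircuit inside `T ∪ {e}` which is
`1` at `e` and nonnegative on `F`. By minimality each `b ∈ T` has a signed circuit `C` with
`C e = 1` whose negative part meets `T` only in `b`. In the sum `∑ C x * D x = 0`, where `D` is a
cocircuit as above with `F` containing the support of `C`, the term at `b` just cancels the term at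
`e`, so `D b = 1` and all other terms vanish. Comparing two elements of `T` through a common `D`
shows that the support of `C` meets `T` only in `b`. Hence the two-term sum `1 - D b = 0` forces
the value `1` at `b` on every signed cocircuit `D` inside `T ∪ {e}` with `D e = 1`. -/

section HittingSet

/-- `T` is a hitting set (transversal) of the set family `𝓕`: it meets every member of `𝓕`. -/
def IsHittingSet (𝓕 : Set (Set α)) (T : Set α) : Prop := ∀ F ∈ 𝓕, (F ∩ T).Nonempty

variable {𝓕 : Set (Set α)} {T : Set α} {b : α}

lemma isHittingSet_compl_iff : IsHittingSet 𝓕 Tᶜ ↔ ∀ F ∈ 𝓕, ¬ F ⊆ T := by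
  simp only [IsHittingSet, inter_compl_nonempty_iff]

theorem exists_minimal_isHittingSet (hfin : ∀ F ∈ 𝓕, F.Finite) (hne : ∀ F ∈ 𝓕, F.Nonempty) :
    ∃ T, Minimal (IsHittingSet 𝓕) T := by
  have hchar : Order.IsOfFiniteCharacter {G | IsHittingSet 𝓕 Gᶜ} := by
    refine fun G ↦ ⟨fun hG H hHG _ F hF ↦ (hG F hF).mono ?_, fun h ↦ ?_⟩
    · exact inter_subset_inter_right F (compl_subset_compl.2 hHG)
    · exact isHittingSet_compl_iff.2 fun F hF hFG ↦
        isHittingSet_compl_iff.1 (h F hFG (hfin F hF)) F hF Subset.rfl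
  have hempty : IsHittingSet 𝓕 ∅ᶜ := by simpa [IsHittingSet] using hne
  obtain ⟨G, -, hG⟩ := hchar.exists_maximal hempty
  refine ⟨Gᶜ, hG.prop, fun T hT hTG ↦ ?_⟩
  exact compl_subset_comm.1 (hG.le_of_ge (y := Tᶜ) (by simpa using hT) (subset_compl_comm.1 hTG))

lemma exists_inter_eq_singleton_of_minimal_isHittingSet (hT : Minimal (IsHittingSet 𝓕) T)
    (hb : b ∈ T) : ∃ F ∈ 𝓕, F ∩ T = {b} := by
  have hnot : ¬ IsHittingSet 𝓕 (T \ {b}) := fun h ↦ (hT.le_of_le h sdiff_subset hb).2 rfl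
  simp only [IsHittingSet, not_forall, not_nonempty_iff_eq_empty, ← inter_sdiff_assoc,
    sdiff_eq_empty] at hnot
  obtain ⟨F, hF, hFb⟩ := hnot
  exact ⟨F, hF, (hT.prop F hF).subset_singleton_iff.1 hFb⟩

end HittingSet

theorem sum_eq_zero_and_eq_zero_of_finsum_eq_zero {R : Type*} [AddCommMonoid R] [PartialOrder R]
    [IsOrderedAddMonoid R] {f : α → R} (hf : (support f).Finite) (hsum : ∑ᶠ x, f x = 0)
    {s : Finset α} (hs : 0 ≤ ∑ x ∈ s, f x) (hnn : ∀ x ∉ s, 0 ≤ f x) :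
    ∑ x ∈ s, f x = 0 ∧ ∀ x ∉ s, f x = 0 := by
  classical
  have hrest : ∀ x ∈ hf.toFinset \ s, 0 ≤ f x := fun x hx ↦ hnn x (Finset.mem_sdiff.1 hx).2
  have hsplit : ∑ x ∈ hf.toFinset \ s, f x + ∑ x ∈ s, f x = 0 := by
    rw [← hsum, finsum_eq_sum_of_support_subset (s := hf.toFinset ∪ s) f (by simp),
      ← Finset.union_sdiff_right, Finset.sum_sdiff Finset.subset_union_right]
  obtain ⟨hrest_zero, hs_zero⟩ :=
    (add_eq_zero_iff_of_nonneg (Finset.sum_nonneg hrest) hs).1 hsplit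
  refine ⟨hs_zero, fun x hx ↦ ?_⟩
  by_contra hfx
  exact hfx ((Finset.sum_eq_zero_iff_of_nonneg hrest).1 hrest_zero x (by simp [hx, hfx]))

section Matroid

variable {M : Matroid α} {e : α}

lemma exists_isCocircuit_disjoint_of_notMem_closure (he : e ∈ M.E) {X : Set α}
    (heX : e ∉ M.closure X) : ∃ K, M.IsCocircuit K ∧ e ∈ K ∧ Disjoint K X := by
  obtain ⟨I, hI⟩ := M.exists_isBasis' X
  have hins : M.Indep (insert e I) :=
    hI.indep.insert_indep_iff.2 (.inl ⟨he, hI.closure_eq_closure ▸ heX⟩)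
  obtain ⟨K, hK, hKI⟩ := hins.exists_isCocircuit_inter_eq_mem (mem_insert e I)
  have heK : e ∈ K := inter_subset_left (hKI.ge rfl)
  refine ⟨K, hK, heK, disjoint_left.2 fun x hxK hxX ↦ ?_⟩
  have hx : x ∈ M.closure I :=
    hI.closure_eq_closure ▸ M.mem_closure_of_mem' hxX (hK.subset_ground hxK)
  have hKI' : ∀ y ∈ K, y ∉ I := fun y hyK hyI ↦ by
    obtain rfl : y = e := hKI.le ⟨hyK, mem_insert_of_mem e hyI⟩
    exact heX (hI.closure_eq_closure ▸ M.mem_closure_of_mem hyI hI.indep.subset_ground)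
  obtain ⟨C, hCI, hC, hxC⟩ := M.exists_isCircuit_of_mem_closure hx (hKI' x hxK)
  refine hC.inter_isCocircuit_ne_singleton hK (e := x) (Subset.antisymm ?_ (by simp [hxC, hxK]))
  exact fun y hy ↦ (hCI hy.1).resolve_right (hKI' y hy.2)

theorem exists_isCircuit_or_isCocircuit_through (he : e ∈ M.E) (A : Set α) :
    (∃ C, M.IsCircuit C ∧ e ∈ C ∧ C ⊆ insert e A) ∨
      ∃ K, M.IsCocircuit K ∧ e ∈ K ∧ K ⊆ insert e Aᶜ := by
  by_cases hcl : e ∈ M.closure (A \ {e})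
  · obtain ⟨C, hCA, hC, heC⟩ := M.exists_isCircuit_of_mem_closure hcl (by simp)
    exact .inl ⟨C, hC, heC, hCA.trans (insert_subset_insert sdiff_subset)⟩
  · obtain ⟨K, hK, heK, hKA⟩ := exists_isCocircuit_disjoint_of_notMem_closure he hcl
    refine .inr ⟨K, hK, heK, fun x hxK ↦ ?_⟩
    by_contra! hx
    simp only [mem_insert_iff, mem_compl_iff, not_or, not_not] at hx
    exact disjoint_left.1 hKA hxK ⟨hx.2, hx.1⟩

end Matroid

namespace IsSignature

variable {𝒞 : Set (Set α)} {O : Set (α → ℤ)} {X : α → ℤ}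

lemma eq_zero_or_one_or_neg_one (h : IsSignature 𝒞 O) (hX : X ∈ O) (x : α) :
    X x = 0 ∨ X x = 1 ∨ X x = -1 :=
  or_iff_not_imp_left.2 (h.signed X hX x)

lemma le_one (h : IsSignature 𝒞 O) (hX : X ∈ O) (x : α) : X x ≤ 1 := by
  rcases h.eq_zero_or_one_or_neg_one hX x with h | h | h <;> simp [h]

lemma eq_one_of_pos (h : IsSignature 𝒞 O) (hX : X ∈ O) {x : α} (hx : 0 < X x) : X x = 1 :=
  le_antisymm (h.le_one hX x) hx

lemma eq_neg_one_of_neg (h : IsSignature 𝒞 O) (hX : X ∈ O) {x : α} (hx : X x < 0) :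
    X x = -1 := by
  rcases h.eq_zero_or_one_or_neg_one hX x with h | h | h <;> omega

lemma exists_apply_eq_one (h : IsSignature 𝒞 O) {C : Set α} (hC : C ∈ 𝒞) {e : α} (he : e ∈ C) :
    ∃ X ∈ O, X e = 1 ∧ support X = C := by
  obtain ⟨X, hX, rfl⟩ := h.exists_signing C hC
  rcases h.signed X hX e he with hXe | hXe
  · exact ⟨X, hX, hXe, rfl⟩
  · exact ⟨-X, h.neg_mem X hX, by simp [hXe], support_neg X⟩

end IsSignature

/-- The sign condition of the colouring lemma: `X` is `1` at `e`, vanishes outside `A ∪ {e}` and is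
nonnegative on `F`. -/
structure IsAdmissible (e : α) (A F : Set α) (X : α → ℤ) : Prop where
  apply_eq_one : X e = 1
  support_subset : support X ⊆ insert e A
  nonneg : ∀ x ∈ F, 0 ≤ X x

namespace IsAdmissible

variable {e b : α} {A F G : Set α} {X : α → ℤ}

lemma mem_support (h : IsAdmissible e A F X) : e ∈ support X := by
  simp [h.apply_eq_one]

lemma mem_of_ne_zero (h : IsAdmissible e A F X) {x : α} (hxe : x ≠ e) (hx : X x ≠ 0) : x ∈ A :=
  (h.support_subset hx).resolve_left hxe

lemma nonneg_of_notMem (h : IsAdmissible e A F X) {x : α} (hx : x ∉ A) : 0 ≤ X x := by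
  by_cases hxe : x = e
  · simp [hxe, h.apply_eq_one]
  · exact (not_not.1 (mt (h.mem_of_ne_zero hxe) hx)).ge

lemma anti (h : IsAdmissible e A F X) (hGF : G ⊆ F) : IsAdmissible e A G X :=
  ⟨h.apply_eq_one, h.support_subset, fun x hx ↦ h.nonneg x (hGF hx)⟩

lemma insert_of_nonneg (h : IsAdmissible e A F X) (hb : 0 ≤ X b) :
    IsAdmissible e A (insert b F) X :=
  ⟨h.apply_eq_one, h.support_subset, forall_mem_insert.2 ⟨hb, h.nonneg⟩⟩

lemma insert_of_sdiff (h : IsAdmissible e (A \ {b}) F X) : IsAdmissible e A (insert b F) X :=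
  ⟨h.apply_eq_one, h.support_subset.trans (insert_subset_insert sdiff_subset),
    (h.insert_of_nonneg (h.nonneg_of_notMem (by simp))).nonneg⟩

end IsAdmissible

/-- The negative part of a signed set, as a set of elements. -/
def negSupport (X : α → ℤ) : Set α := {x | X x < 0}

/-- The negative parts of the members of `O` that are positive at `e`. -/
def negSupportsThrough (O : Set (α → ℤ)) (e : α) : Set (Set α) :=
  negSupport '' {X ∈ O | X e = 1}

lemma negSupport_subset_support (X : α → ℤ) : negSupport X ⊆ support X := fun _ hx ↦ hx.ne

namespace IsOrientation

variable {M : Matroid α} {O Ostar : Set (α → ℤ)} {C D : α → ℤ} {e b : α} {A A' F T : Set α}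

lemma finite_support [M.Finitary] (hor : IsOrientation M O Ostar) (hC : C ∈ O) :
    (support C).Finite :=
  Matroid.IsCircuit.finite (M := M) (hor.circuit_signature.dom_mem C hC)

lemma not_neg_of_isAdmissible (hor : IsOrientation M O Ostar) (hC : C ∈ O) (hD : D ∈ Ostar)
    (hCA : IsAdmissible e A F C) (hDA : IsAdmissible e A' F D) (hA : A ∩ A' ⊆ insert b F)
    (hCb : C b < 0) : ¬ D b < 0 := by
  intro hDb
  refine (hor.orthogonality C hC D hD ⟨e, hCA.mem_support, hDA.mem_support⟩).1 ?_
  rintro x ⟨hxC, hxD⟩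
  by_cases hxe : x = e
  · rw [hxe, hCA.apply_eq_one, hDA.apply_eq_one]
  rcases hA ⟨hCA.mem_of_ne_zero hxe hxC, hDA.mem_of_ne_zero hxe hxD⟩ with rfl | hxF
  · rw [hor.circuit_signature.eq_neg_one_of_neg hC hCb,
      hor.cocircuit_signature.eq_neg_one_of_neg hD hDb]
  · rw [hor.circuit_signature.eq_one_of_pos hC ((hCA.nonneg x hxF).lt_of_ne' hxC),
      hor.cocircuit_signature.eq_one_of_pos hD ((hDA.nonneg x hxF).lt_of_ne' hxD)]

/-- Minty's colouring lemma, in a form invariant under duality: elements of `A \ A'` are available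
to the circuit only, elements of `A' \ A` to the cocircuit only, and those of `F` to both, but with
nonnegative sign. -/
theorem exists_isAdmissible_or (hor : IsOrientation M O Ostar) (he : e ∈ M.E) (hF : F.Finite)
    (hAA' : A ∪ A' = univ) (hAF : A ∩ A' = F) :
    (∃ C ∈ O, IsAdmissible e A F C) ∨ ∃ D ∈ Ostar, IsAdmissible e A' F D := by
  induction F, hF using Set.Finite.induction_on generalizing A A' with
  | empty =>
    have hcompl : IsCompl A A' := isCompl_iff.2 ⟨disjoint_iff.2 hAF, codisjoint_iff.2 hAA'⟩
    obtain rfl : Aᶜ = A' := hcompl.compl_eq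
    rcases exists_isCircuit_or_isCocircuit_through he A with ⟨C, hC, heC, hCA⟩ | ⟨K, hK, heK, hKA⟩
    · obtain ⟨X, hX, hXe, rfl⟩ := hor.circuit_signature.exists_apply_eq_one hC heC
      exact .inl ⟨X, hX, hXe, hCA, by simp⟩
    · obtain ⟨X, hX, hXe, rfl⟩ := hor.cocircuit_signature.exists_apply_eq_one hK heK
      exact .inr ⟨X, hX, hXe, hKA, by simp⟩
  | @insert b F hbF _ ih =>
    have hunion : A \ {b} ∪ A' = univ ∧ A ∪ A' \ {b} = univ := by grind
    have hinter : A \ {b} ∩ A' = F ∧ A ∩ (A' \ {b}) = F := by grind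
    rcases ih hunion.1 hinter.1 with ⟨C, hC, hCA⟩ | ⟨D, hD, hDA⟩
    · exact .inl ⟨C, hC, hCA.insert_of_sdiff⟩
    rcases ih hunion.2 hinter.2 with ⟨C, hC, hCA⟩ | ⟨D', hD', hDA'⟩
    swap
    · exact .inr ⟨D', hD', hDA'.insert_of_sdiff⟩
    rcases le_or_gt 0 (C b) with hCb | hCb
    · exact .inl ⟨C, hC, hCA.insert_of_nonneg hCb⟩
    · exact .inr ⟨D, hD, hDA.insert_of_nonneg
        (not_lt.1 (hor.not_neg_of_isAdmissible hC hD hCA hDA hAF.le hCb))⟩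

lemma exists_isAdmissible_of_isHittingSet (hor : IsOrientation M O Ostar) (he : e ∈ M.E)
    (hT : IsHittingSet (negSupportsThrough O e) T) (hF : F.Finite) :
    ∃ D ∈ Ostar, IsAdmissible e T F D := by
  have hunion : (T \ F)ᶜ ∪ T = univ := by grind
  have hinter : (T \ F)ᶜ ∩ T = F ∩ T := by grind
  rcases hor.exists_isAdmissible_or he (hF.inter_of_left T) hunion hinter with
    ⟨C, hC, hCA⟩ | ⟨D, hD, hDA⟩
  · obtain ⟨x, hxC : C x < 0, hxT⟩ := hT _ ⟨C, ⟨hC, hCA.apply_eq_one⟩, rfl⟩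
    by_cases hxF : x ∈ F
    · exact absurd (hCA.nonneg x ⟨hxF, hxT⟩) hxC.not_ge
    · exact absurd (hCA.nonneg_of_notMem (not_not.2 ⟨hxT, hxF⟩)) hxC.not_ge
  · refine ⟨D, hD, hDA.apply_eq_one, hDA.support_subset, fun x hxF ↦ ?_⟩
    by_cases hxT : x ∈ T
    · exact hDA.nonneg x ⟨hxF, hxT⟩
    · exact hDA.nonneg_of_notMem hxT

lemma disjoint_of_isPositive (hor : IsOrientation M O Ostar) (hC : C ∈ O) (hD : D ∈ Ostar)
    (hCpos : IsPositive C) (hDpos : IsPositive D) : Disjoint (support C) (support D) := by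
  by_contra hmeet
  exact (hor.orthogonality C hC D hD (not_disjoint_iff_nonempty_inter.1 hmeet)).1
    fun x hx ↦ (hCpos x hx.1).trans (hDpos x hx.2).symm

variable [M.Finitary]

lemma eq_one_and_mul_eq_zero (hor : IsOrientation M O Ostar) (hbin : IsBinaryOrientation O Ostar)
    (hC : C ∈ O) (hD : D ∈ Ostar) (hCe : C e = 1) (hDe : D e = 1) (hCb : C b < 0)
    (hnn : ∀ x, x ≠ e → x ≠ b → 0 ≤ C x * D x) :
    D b = 1 ∧ ∀ x, x ≠ e → x ≠ b → C x * D x = 0 := by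
  classical
  have heb : e ≠ b := by rintro rfl; omega
  have hCb : C b = -1 := hor.circuit_signature.eq_neg_one_of_neg hC hCb
  have hDb : D b ≤ 1 := hor.cocircuit_signature.le_one hD b
  have hfin : (support fun x ↦ C x * D x).Finite :=
    (hor.finite_support hC).subset (support_mul_subset_left C D)
  have hpair : ∑ x ∈ {e, b}, C x * D x = 1 - D b := by
    rw [Finset.sum_pair heb, hCe, hDe, hCb]
    ring
  obtain ⟨hzero, hrest⟩ := sum_eq_zero_and_eq_zero_of_finsum_eq_zero hfin (hbin C hC D hD)
    (s := {e, b}) (by omega) (by simpa using hnn)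
  exact ⟨by omega, by simpa using hrest⟩

lemma eq_one_and_mul_eq_zero_of_isAdmissible (hor : IsOrientation M O Ostar)
    (hbin : IsBinaryOrientation O Ostar) (hC : C ∈ O) (hCe : C e = 1)
    (hCT : negSupport C ∩ T = {b}) (hD : D ∈ Ostar) (hDT : IsAdmissible e T (support C) D) :
    D b = 1 ∧ ∀ x, x ≠ e → x ≠ b → C x * D x = 0 := by
  have hCb : C b < 0 := (hCT.ge rfl).1
  refine hor.eq_one_and_mul_eq_zero hbin hC hD hCe hDT.apply_eq_one hCb fun x hxe hxb ↦ ?_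
  by_cases hxC : C x = 0
  · simp [hxC]
  by_cases hxD : D x = 0
  · simp [hxD]
  have hxT : x ∈ T := hDT.mem_of_ne_zero hxe hxD
  have hCx : 0 ≤ C x := not_lt.1 fun hx ↦ hxb (hCT.le ⟨hx, hxT⟩)
  exact mul_nonneg hCx (hDT.nonneg x hxC)

lemma support_inter_subset_singleton (hor : IsOrientation M O Ostar)
    (hbin : IsBinaryOrientation O Ostar) (he : e ∈ M.E)
    (hT : Minimal (IsHittingSet (negSupportsThrough O e)) T) (hC : C ∈ O) (hCe : C e = 1)
    (hCT : negSupport C ∩ T = {b}) : support C ∩ T ⊆ {b} := by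
  rintro x ⟨hxC, hxT⟩
  by_contra hxb
  obtain ⟨_, ⟨C', ⟨hC', hCe'⟩, rfl⟩, hCT'⟩ :=
    exists_inter_eq_singleton_of_minimal_isHittingSet hT hxT
  have hxe : x ≠ e := by
    rintro rfl
    have : C' x < 0 := (hCT'.ge rfl).1
    omega
  obtain ⟨D, hD, hDT⟩ := hor.exists_isAdmissible_of_isHittingSet he hT.prop
    ((hor.finite_support hC).union (hor.finite_support hC'))
  have hDx : D x = 1 := (hor.eq_one_and_mul_eq_zero_of_isAdmissible hbin hC' hCe' hCT' hD
    (hDT.anti subset_union_right)).1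
  have hCDx : C x * D x = 0 := (hor.eq_one_and_mul_eq_zero_of_isAdmissible hbin hC hCe hCT hD
    (hDT.anti subset_union_left)).2 x hxe hxb
  exact hxC (by simpa [hDx] using hCDx)

lemma isPositive_of_minimal_isHittingSet (hor : IsOrientation M O Ostar)
    (hbin : IsBinaryOrientation O Ostar) (he : e ∈ M.E)
    (hT : Minimal (IsHittingSet (negSupportsThrough O e)) T) (hD : D ∈ Ostar)
    (hDT : IsAdmissible e T ∅ D) : IsPositive D := by
  intro b hbD
  by_cases hbe : b = e
  · rw [hbe, hDT.apply_eq_one]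
  obtain ⟨_, ⟨C, ⟨hC, hCe⟩, rfl⟩, hCT⟩ :=
    exists_inter_eq_singleton_of_minimal_isHittingSet hT (hDT.mem_of_ne_zero hbe hbD)
  have hCb : C b < 0 := (hCT.ge rfl).1
  refine (hor.eq_one_and_mul_eq_zero hbin hC hD hCe hDT.apply_eq_one hCb fun x hxe hxb ↦ ?_).1
  by_contra! hx
  have hCx : C x ≠ 0 := left_ne_zero_of_mul hx.ne
  have hxT : x ∈ T := hDT.mem_of_ne_zero hxe (right_ne_zero_of_mul hx.ne)
  exact hxb (hor.support_inter_subset_singleton hbin he hT hC hCe hCT ⟨hCx, hxT⟩)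

theorem exists_isPositive_cocircuit (hor : IsOrientation M O Ostar)
    (hbin : IsBinaryOrientation O Ostar) (he : e ∈ M.E)
    (hpos : ¬ ∃ C ∈ O, IsPositive C ∧ e ∈ support C) :
    ∃ D ∈ Ostar, IsPositive D ∧ e ∈ support D := by
  have hfin : ∀ F ∈ negSupportsThrough O e, F.Finite := by
    rintro _ ⟨C, ⟨hC, -⟩, rfl⟩
    exact (hor.finite_support hC).subset (negSupport_subset_support C)
  have hne : ∀ F ∈ negSupportsThrough O e, F.Nonempty := by
    rintro _ ⟨C, ⟨hC, hCe⟩, rfl⟩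
    by_contra hempty
    have hnn : ∀ x, 0 ≤ C x := fun x ↦ not_lt.1 fun hx ↦ hempty ⟨x, hx⟩
    exact hpos ⟨C, hC, fun x hx ↦ hor.circuit_signature.eq_one_of_pos hC ((hnn x).lt_of_ne' hx),
      by simp [hCe]⟩
  obtain ⟨T, hT⟩ := exists_minimal_isHittingSet hfin hne
  obtain ⟨D, hD, hDT⟩ := hor.exists_isAdmissible_of_isHittingSet he hT.prop finite_empty
  exact ⟨D, hD, hor.isPositive_of_minimal_isHittingSet hbin he hT hD hDT, hDT.mem_support⟩

end IsOrientation

/-- Farkas lemma for finitary binary oriented matroids: through every ground-set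
element there is either a positive signed circuit or a positive signed cocircuit,
but not both. -/
theorem farkas_binary (M : Matroid α) [M.Finitary] (O Ostar : Set (α → ℤ))
    (hor : IsOrientation M O Ostar) (hbin : IsBinaryOrientation O Ostar) :
    ∀ e ∈ M.E, Xor' (∃ C ∈ O, IsPositive C ∧ e ∈ Function.support C)
      (∃ D ∈ Ostar, IsPositive D ∧ e ∈ Function.support D) := by
  intro e he
  by_cases hpos : ∃ C ∈ O, IsPositive C ∧ e ∈ support C
  · refine .inl ⟨hpos, ?_⟩
    rintro ⟨D, hD, hDpos, heD⟩
    obtain ⟨C, hC, hCpos, heC⟩ := hpos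
    exact disjoint_left.1 (hor.disjoint_of_isPositive hC hD hCpos hDpos) heC heD
  · exact .inr ⟨hor.exists_isPositive_cocircuit hbin he hpos, hpos⟩
end

section
/- Let (M, O, O*) be a finitary binary oriented matroid with ground set E, and let e₀ ∈ E be such that no positive signed circuit C ∈ O has e₀ in its domain. Then there exists a set F ⊆ E with e₀ ∈ F such that Σ_{e ∈ F ∩ dom(C)} C(e) = 0 for every C ∈ O. -/
open Set Function

variable {α : Type*}

/-!
By Minty's painting lemma, since no positive signed circuit goes through `e₀`, every finite set
`X` admits a signed cocircuit with value `1` at `e₀` and nonnegative on `X`. Rado's selection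
principle produces a set `F` whose indicator function agrees with one of these cocircuits on any
prescribed finite set. A signed circuit `C` has finite domain, so `∑_{e ∈ F} C(e)` is the product
of `C` with a signed cocircuit, which vanishes because the orientation is binary.
-/

theorem exists_isCocircuit_mem_disjoint_of_notMem_closure {M : Matroid α} {X : Set α} {e : α}
    (he : e ∈ M.E) (heX : e ∉ M.closure X) : ∃ K, M.IsCocircuit K ∧ e ∈ K ∧ Disjoint K X := by
  obtain ⟨I, hI⟩ := M.exists_isBasis' X
  rw [← hI.closure_eq_closure] at heX
  have heI : e ∉ I := fun h ↦ heX (M.mem_closure_of_mem h hI.indep.subset_ground)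
  have hindep : M.Indep (insert e I) := hI.indep.insert_indep_iff.2 (.inl ⟨he, heX⟩)
  obtain ⟨B, hB, hIB⟩ := hindep.exists_isBase_superset
  have heB : e ∈ B := hIB (mem_insert e I)
  refine ⟨M.E \ M.closure (B \ {e}), hB.compl_closure_sdiff_singleton_isCocircuit heB,
    ⟨he, hB.indep.notMem_closure_sdiff_of_mem heB⟩, disjoint_left.2 ?_⟩
  rintro x ⟨hxE, hx⟩ hxX
  have hI_sub : I ⊆ B \ {e} := subset_sdiff_singleton ((subset_insert e I).trans hIB) heI
  have hxI : x ∈ M.closure I := hI.closure_eq_closure ▸ M.mem_closure_of_mem' hxX hxE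
  exact hx (M.closure_subset_closure hI_sub hxI)

theorem IsSignature.exists_signing_eq_one {𝒞 : Set (Set α)} {O : Set (α → ℤ)}
    (hO : IsSignature 𝒞 O) {S : Set α} (hS : S ∈ 𝒞) {e : α} (he : e ∈ S) :
    ∃ C ∈ O, support C = S ∧ C e = 1 := by
  obtain ⟨C, hC, rfl⟩ := hO.exists_signing S hS
  rcases hO.signed C hC e he with hpos | hneg
  · exact ⟨C, hC, rfl, hpos⟩
  · exact ⟨-C, hO.neg_mem C hC, support_neg C, by simp [hneg]⟩

section Orientation

variable {M : Matroid α} {O Ostar : Set (α → ℤ)} {C D : α → ℤ} {e₀ : α}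

theorem IsOrientation.isCircuit_support (hor : IsOrientation M O Ostar) (hC : C ∈ O) :
    M.IsCircuit (support C) :=
  hor.circuit_signature.dom_mem C hC

theorem IsOrientation.isCocircuit_support (hor : IsOrientation M O Ostar) (hD : D ∈ Ostar) :
    M.IsCocircuit (support D) :=
  hor.cocircuit_signature.dom_mem D hD

theorem IsOrientation.exists_mul_neg (hor : IsOrientation M O Ostar) (hC : C ∈ O)
    (hD : D ∈ Ostar) (hCD : (support C ∩ support D).Nonempty) : ∃ e, C e * D e < 0 := by
  obtain ⟨e, he, hne⟩ : ∃ e ∈ support C ∩ support D, C e ≠ D e := by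
    simpa only [not_forall, exists_prop] using (hor.orthogonality C hC D hD hCD).1
  have hCe := hor.circuit_signature.signed C hC e he.1
  have hDe := hor.cocircuit_signature.signed D hD e he.2
  exact ⟨e, by grind⟩

theorem IsOrientation.exists_circuit_subset_or_cocircuit_eq_zero
    (hor : IsOrientation M O Ostar) (he₀ : e₀ ∈ M.E) {X : Set α} (hX : e₀ ∉ X) :
    (∃ C ∈ O, C e₀ = 1 ∧ support C ⊆ insert e₀ X) ∨
      ∃ D ∈ Ostar, D e₀ = 1 ∧ ∀ e ∈ X, D e = 0 := by
  by_cases hcl : e₀ ∈ M.closure X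
  · obtain ⟨S, hSX, hS, heS⟩ := Matroid.exists_isCircuit_of_mem_closure hcl hX
    obtain ⟨C, hC, rfl, hCe₀⟩ := hor.circuit_signature.exists_signing_eq_one (S := S) hS heS
    exact .inl ⟨C, hC, hCe₀, hSX⟩
  · obtain ⟨K, hK, heK, hdisj⟩ := exists_isCocircuit_mem_disjoint_of_notMem_closure he₀ hcl
    obtain ⟨D, hD, rfl, hDe₀⟩ := hor.cocircuit_signature.exists_signing_eq_one (S := K) hK heK
    exact .inr ⟨D, hD, hDe₀, fun e he ↦ notMem_support.1 (disjoint_right.1 hdisj he)⟩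

/-- **Minty's painting lemma**: `A` is directed, `X` is reserved for circuits, and the remaining
elements other than `e₀` are reserved for cocircuits. -/
theorem IsOrientation.painting (hor : IsOrientation M O Ostar) (he₀ : e₀ ∈ M.E) (A : Finset α)
    {X : Set α} (hX : e₀ ∉ X) (hAX : Disjoint (A : Set α) X) :
    (∃ C ∈ O, C e₀ = 1 ∧ support C ⊆ insert e₀ (A ∪ X) ∧ ∀ e ∈ A, 0 ≤ C e) ∨
      ∃ D ∈ Ostar, D e₀ = 1 ∧ (∀ e ∈ X, D e = 0) ∧ ∀ e ∈ A, 0 ≤ D e := by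
  classical
  induction A using Finset.induction_on generalizing X with
  | empty => simpa using hor.exists_circuit_subset_or_cocircuit_eq_zero he₀ hX
  | insert a A ha ih =>
    rw [Finset.coe_insert, disjoint_insert_left] at hAX
    obtain ⟨haX, hAX⟩ := hAX
    simp only [Finset.coe_insert, Finset.forall_mem_insert]
    rcases ih hX hAX with ⟨C, hC, hCe₀, hCs, hCA⟩ | ⟨D, hD, hDe₀, hDX, hDA⟩
    · have hCa : 0 ≤ C a := by
        by_contra! hneg
        have ha_mem := hCs (mem_support.2 hneg.ne)
        grind
      exact .inl ⟨C, hC, hCe₀, by grind, hCa, hCA⟩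
    by_cases hDa : 0 ≤ D a
    · exact .inr ⟨D, hD, hDe₀, hDX, hDa, hDA⟩
    have hae₀ : e₀ ≠ a := by grind
    rcases ih (X := insert a X) (by grind) (disjoint_insert_right.2 ⟨ha, hAX⟩) with
      ⟨C, hC, hCe₀, hCs, hCA⟩ | ⟨D', hD', hD'e₀, hD'X, hD'A⟩
    · by_cases hCa : 0 ≤ C a
      · exact .inl ⟨C, hC, hCe₀, by grind, hCa, hCA⟩
      have hCD : ∀ e, 0 ≤ C e * D e := by
        intro e
        by_cases he : C e = 0
        · simp [he]
        rcases hCs he with rfl | heA | rfl | heX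
        · simp [hCe₀, hDe₀]
        · exact mul_nonneg (hCA e heA) (hDA e heA)
        · exact mul_nonneg_of_nonpos_of_nonpos (not_le.1 hCa).le (not_le.1 hDa).le
        · simp [hDX e heX]
      obtain ⟨e, he⟩ := hor.exists_mul_neg hC hD ⟨e₀, by simp [hCe₀], by simp [hDe₀]⟩
      exact absurd he (hCD e).not_gt
    · rw [forall_mem_insert] at hD'X
      exact .inr ⟨D', hD', hD'e₀, hD'X.2, hD'X.1.ge, hD'A⟩

theorem IsOrientation.exists_cocircuit_nonneg_on (hor : IsOrientation M O Ostar)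
    (he₀ : e₀ ∈ M.E) (hno : ¬ ∃ C ∈ O, IsPositive C ∧ e₀ ∈ support C) (A : Finset α) :
    ∃ D ∈ Ostar, D e₀ = 1 ∧ ∀ e ∈ A, 0 ≤ D e := by
  rcases hor.painting he₀ A (notMem_empty e₀) (disjoint_empty _) with
    ⟨C, hC, hCe₀, hCs, hCA⟩ | ⟨D, hD, hDe₀, -, hDA⟩
  · have hpos : IsPositive C := by
      intro e he
      have hsign := hor.circuit_signature.signed C hC e he
      have he_mem := hCs he
      grind
    exact absurd ⟨C, hC, hpos, by simp [hCe₀]⟩ hno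
  · exact ⟨D, hD, hDe₀, hDA⟩

end Orientation

theorem exists_set_eqOn_indicator {𝒟 : Set (α → ℤ)} (hsigned : ∀ D ∈ 𝒟, IsSignedSet D)
    (hnonneg : ∀ A : Finset α, ∃ D ∈ 𝒟, ∀ e ∈ A, 0 ≤ D e) :
    ∃ F : Set α, ∀ A : Finset α, ∃ D ∈ 𝒟, EqOn D (F.indicator 1) A := by
  choose D hD hDA using hnonneg
  obtain ⟨F, hF⟩ := Finset.rado_selection fun A e ↦ D A e = 1
  refine ⟨{e | F e}, fun A ↦ ?_⟩
  obtain ⟨B, hAB, hFB⟩ := hF A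
  refine ⟨D B, hD B, fun e he ↦ ?_⟩
  have he_mem : e ∈ {e | F e} ↔ D B e = 1 := iff_of_eq (hFB e he)
  by_cases hDe : D B e = 1
  · rw [indicator_of_mem (he_mem.2 hDe), hDe, Pi.one_apply]
  · rw [indicator_of_notMem (he_mem.not.2 hDe)]
    by_contra hne
    have hneg : D B e = -1 := (hsigned (D B) (hD B) e hne).resolve_left hDe
    have hnonneg : 0 ≤ D B e := hDA B e (hAB he)
    lia

theorem finsum_mem_eq_finsum_mul_of_eqOn_indicator {R : Type*} [NonAssocSemiring R] {f g : α → R}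
    {s : Set α} (hg : EqOn g (s.indicator 1) (support f)) :
    ∑ᶠ e ∈ s, f e = ∑ᶠ e, f e * g e := by
  classical
  rw [finsum_mem_def]
  refine finsum_congr fun e ↦ ?_
  by_cases he : f e = 0
  · simp [he]
  · simp [hg he, indicator_apply]

/-- If no positive signed circuit of a finitary binary oriented matroid goes through
`e₀`, then there is a set `F ⊆ E` containing `e₀` such that
`∑_{e ∈ F ∩ dom C} C(e) = 0` for every signed circuit `C ∈ O`. -/
theorem exists_zero_sum_set (M : Matroid α) [M.Finitary] (O Ostar : Set (α → ℤ))
    (hor : IsOrientation M O Ostar) (hbin : IsBinaryOrientation O Ostar)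
    (e₀ : α) (he₀ : e₀ ∈ M.E)
    (hno : ¬ ∃ C ∈ O, IsPositive C ∧ e₀ ∈ Function.support C) :
    ∃ F ⊆ M.E, e₀ ∈ F ∧ ∀ C ∈ O, ∑ᶠ e ∈ F, C e = 0 := by
  obtain ⟨F, hF⟩ : ∃ F : Set α, ∀ A : Finset α,
      ∃ D ∈ {D ∈ Ostar | D e₀ = 1}, EqOn D (F.indicator 1) A := by
    refine exists_set_eqOn_indicator (fun D hD ↦ hor.cocircuit_signature.signed D hD.1) fun A ↦ ?_
    simpa only [mem_ofPred_eq, and_assoc] using hor.exists_cocircuit_nonneg_on he₀ hno A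
  refine ⟨F, fun e he ↦ ?_, ?_, fun C hC ↦ ?_⟩
  · obtain ⟨D, ⟨hD, -⟩, hDF⟩ := hF {e}
    have hDe : D e = 1 := by simpa [he] using hDF (Finset.mem_singleton_self e)
    exact (hor.isCocircuit_support hD).subset_ground (by simp [hDe])
  · obtain ⟨D, ⟨-, hDe₀⟩, hDF⟩ := hF {e₀}
    by_contra he₀F
    simpa [hDe₀, he₀F] using hDF (Finset.mem_singleton_self e₀)
  · have hfin : (support C).Finite := (hor.isCircuit_support hC).finite
    obtain ⟨D, ⟨hD, -⟩, hDF⟩ := hF hfin.toFinset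
    rw [hfin.coe_toFinset] at hDF
    rw [finsum_mem_eq_finsum_mul_of_eqOn_indicator hDF, hbin C hC D hD]
end

section
/- A finitary binary oriented matroid can be partitioned into directed circuits if and only if it is balanced. That is, for a finitary binary oriented matroid (M, O, O*) with ground set E, the following are equivalent: (a) there is a set 𝒜 of positive signed circuits in O whose domains are pairwise disjoint and whose domains have union E; (b) for every D ∈ O*, the sets D⁺ = {e ∈ dom(D) : D(e) = +1} and D⁻ = {e ∈ dom(D) : D(e) = −1} have the same cardinality. -/
open Set Function

variable {α : Type*}

/-!
A positive circuit is finite and orthogonal to every signed cocircuit, so it meets the positive and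
the negative part of each of them in equally many elements; a partition into positive circuits
therefore forces balance.

For the converse, an infinite form of Minty's lemma puts every element in a positive circuit or in a
nonnegative cocircuit, and balance rules out the latter. Deleting a positive circuit is a finite
change on which every cocircuit is balanced, so balance survives and finite sets can be covered one
element at a time. For an infinite set `A` of cardinality `κ`, induct on `κ` and peel off fewer than
`κ` elements at each of `κ` stages. The danger is a limit stage `i`, where a set `N` of at
most `|i|` elements has been removed. To keep it harmless, whenever a finite part `t ⊆ N` of a
circuit has at most `|i|` pairwise disjoint completions, the peeled sets swallow a maximal family of
them. A cocircuit `K` that meets both `N` and its complement then has more than `|i|` elements: some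
circuit `C` meets `K \ N` in exactly one element, so by parity `K` meets the part `t = C ∩ N` in an
odd number of elements, hence meets each of the more than `|i|` disjoint completions of `t`.
Removing `N` leaves both halves of such a large cocircuit with their common cardinality.
-/

section Signed

lemma IsSignedSet.eq_zero_or {g : α → ℤ} (hg : IsSignedSet g) (e : α) :
    g e = 0 ∨ g e = 1 ∨ g e = -1 := by
  by_cases he : g e = 0
  · exact Or.inl he
  · exact Or.inr (hg e he)

lemma IsSignedSet.indicator {g : α → ℤ} (hg : IsSignedSet g) (X : Set α) :
    IsSignedSet (X.indicator g) := by
  intro e he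
  obtain ⟨heg, heX⟩ := Set.indicator_apply_ne_zero.1 he |>.symm
  simpa [heX] using hg e heg

lemma IsSignedSet.isPositive {g : α → ℤ} (hg : IsSignedSet g) (h : ∀ e, 0 ≤ g e) :
    IsPositive g :=
  fun e he ↦ (hg e he).resolve_right fun h' ↦ by linarith [h e]

/-- `O` is a set of signed sets closed under negation whose domains are exactly the members of
`𝒞`. Unlike in `IsSignature`, a member of `𝒞` may carry several pairs of signings: this is all that
is evident for the restrictions of signed cocircuits to a deletion. -/
structure IsSigning (𝒞 : Set (Set α)) (O : Set (α → ℤ)) : Prop where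
  signed : ∀ g ∈ O, IsSignedSet g
  dom_mem : ∀ g ∈ O, support g ∈ 𝒞
  exists_signing : ∀ C ∈ 𝒞, ∃ g ∈ O, support g = C
  neg_mem : ∀ g ∈ O, -g ∈ O

lemma IsSignature.isSigning {𝒞 : Set (Set α)} {O : Set (α → ℤ)} (h : IsSignature 𝒞 O) :
    IsSigning 𝒞 O :=
  ⟨h.signed, h.dom_mem, h.exists_signing, h.neg_mem⟩

lemma IsSigning.exists_apply_eq_one {𝒞 : Set (Set α)} {O : Set (α → ℤ)} (h : IsSigning 𝒞 O)
    {C : Set α} (hC : C ∈ 𝒞) {e : α} (he : e ∈ C) : ∃ g ∈ O, support g = C ∧ g e = 1 := by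
  obtain ⟨g, hg, rfl⟩ := h.exists_signing C hC
  rcases h.signed g hg e he with he | he
  · exact ⟨g, hg, rfl, he⟩
  · exact ⟨-g, h.neg_mem g hg, support_neg g, by simp [he]⟩

/-- A signing `O` of the circuits of `M` and a signing `Ostar` of its cocircuits that are orthogonal
as integer vectors: the data of a binary oriented matroid used in the argument. -/
structure IsBinarySigning (M : Matroid α) (O Ostar : Set (α → ℤ)) : Prop where
  circuit : IsSigning {C | M.IsCircuit C} O
  cocircuit : IsSigning {K | M.IsCocircuit K} Ostar
  orthogonal : IsBinaryOrientation O Ostar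

lemma IsOrientation.isBinarySigning {M : Matroid α} {O Ostar : Set (α → ℤ)}
    (h : IsOrientation M O Ostar) (hbin : IsBinaryOrientation O Ostar) :
    IsBinarySigning M O Ostar :=
  ⟨h.circuit_signature.isSigning, h.cocircuit_signature.isSigning, hbin⟩

end Signed

section Orthogonality

variable {M : Matroid α} [M.Finitary] {O Ostar : Set (α → ℤ)} {g D : α → ℤ} {e f : α}

lemma sum_le_finsum_of_nonneg {ι R : Type*} [AddCommMonoid R] [PartialOrder R]
    [IsOrderedAddMonoid R] {φ : ι → R} (hφ : (support φ).Finite) {S : Finset ι}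
    (hS : ∀ i ∉ S, 0 ≤ φ i) :
    ∑ i ∈ S, φ i ≤ ∑ᶠ i, φ i := by
  classical
  rw [finsum_eq_sum_of_support_subset φ (s := hφ.toFinset ∪ S) (by simp)]
  exact Finset.sum_le_sum_of_subset_of_nonneg Finset.subset_union_right fun i _ hi ↦ hS i hi

lemma IsBinarySigning.finite_support (h : IsBinarySigning M O Ostar) (hg : g ∈ O) :
    (support g).Finite :=
  Matroid.IsCircuit.finite (h.circuit.dom_mem g hg)

lemma IsBinarySigning.sum_nonpos (h : IsBinarySigning M O Ostar) (hg : g ∈ O) (hD : D ∈ Ostar)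
    (S : Finset α) (hS : ∀ x ∉ S, 0 ≤ g x * D x) : ∑ x ∈ S, g x * D x ≤ 0 :=
  (sum_le_finsum_of_nonneg ((h.finite_support hg).subset (support_mul_subset_left g D)) hS).trans_eq
    (h.orthogonal g hg D hD)

lemma IsBinarySigning.mul_nonpos (h : IsBinarySigning M O Ostar) (hg : g ∈ O) (hD : D ∈ Ostar)
    (hS : ∀ x, x ≠ e → 0 ≤ g x * D x) : g e * D e ≤ 0 := by
  simpa using h.sum_nonpos hg hD {e} (by simpa using hS)

lemma IsBinarySigning.apply_nonneg (h : IsBinarySigning M O Ostar) (hg : g ∈ O) (hD : D ∈ Ostar)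
    (hge : g e = 1) (hDe : D e = 1) (hgf : g f < 0)
    (hS : ∀ x, x ≠ e → x ≠ f → 0 ≤ g x * D x) : 0 ≤ D f := by
  by_contra! hDf
  have hpair : g e * D e ≤ 0 := h.mul_nonpos hg hD fun x hxe ↦ by
    rcases eq_or_ne x f with rfl | hxf
    · exact (mul_pos_of_neg_of_neg hgf hDf).le
    · exact hS x hxe hxf
  simp [hge, hDe] at hpair

lemma IsBinarySigning.add_nonpos (h : IsBinarySigning M O Ostar) (hg : g ∈ O) (hD : D ∈ Ostar)
    (hef : e ≠ f) (hS : ∀ x, x ≠ e → x ≠ f → 0 ≤ g x * D x) : g e * D e + g f * D f ≤ 0 := by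
  classical
  simpa [Finset.sum_pair hef] using h.sum_nonpos hg hD {e, f} (by simpa using hS)

end Orthogonality

section Minty

variable {M : Matroid α} {O Ostar : Set (α → ℤ)} {e f : α} {Y : Set α}

lemma IsBinarySigning.exists_circuit_or_cocircuit (h : IsBinarySigning M O Ostar) (he : e ∈ M.E)
    (heY : e ∉ Y) :
    (∃ g ∈ O, g e = 1 ∧ support g ⊆ insert e Y) ∨ ∃ D ∈ Ostar, D e = 1 ∧ ∀ x ∈ Y, D x = 0 := by
  by_cases hcl : e ∈ M.closure Y
  · obtain ⟨C, hCY, hC, heC⟩ := Matroid.exists_isCircuit_of_mem_closure hcl heY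
    obtain ⟨g, hg, rfl, hge⟩ := h.circuit.exists_apply_eq_one hC heC
    exact Or.inl ⟨g, hg, hge, hCY⟩
  · obtain ⟨K, hK, heK⟩ := (Matroid.contract_isNonloop_iff.2 ⟨he, hcl⟩).exists_mem_isCocircuit
    obtain ⟨hK, hKY⟩ := Matroid.contract_isCocircuit_iff.1 hK
    obtain ⟨D, hD, rfl, hDe⟩ := h.cocircuit.exists_apply_eq_one hK heK
    exact Or.inr ⟨D, hD, hDe, fun x hx ↦ notMem_support.1 (disjoint_right.1 hKY hx)⟩

lemma IsBinarySigning.exists_circuit_or_cocircuit_of_finset [M.Finitary]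
    (h : IsBinarySigning M O Ostar) (he : e ∈ M.E) {P : Finset α} (heP : e ∉ P) (heY : e ∉ Y) :
    (∃ g ∈ O, g e = 1 ∧ support g ⊆ insert e (Y ∪ P) ∧ ∀ x ∉ Y, 0 ≤ g x) ∨
      ∃ D ∈ Ostar, D e = 1 ∧ (∀ x ∈ Y, D x = 0) ∧ ∀ x ∈ P, 0 ≤ D x := by
  classical
  induction P using Finset.induction_on generalizing Y with
  | empty =>
    rcases h.exists_circuit_or_cocircuit he heY with ⟨g, hg, hge, hgY⟩ | ⟨D, hD, hDe, hDY⟩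
    · refine Or.inl ⟨g, hg, hge, by simpa using hgY, fun x hxY ↦ ?_⟩
      by_contra hx
      rcases hgY (mem_support.2 fun h0 ↦ hx h0.ge) with rfl | hxY'
      · exact hx (hge ▸ zero_le_one)
      · exact hxY hxY'
    · exact Or.inr ⟨D, hD, hDe, hDY, by simp⟩
  | insert f P hf ih =>
    obtain ⟨hef, heP⟩ : e ≠ f ∧ e ∉ P := by simpa using heP
    rcases ih heP (Y := insert f Y) (by simp [hef, heY]) with
      ⟨g, hg, hge, hgs, hgY⟩ | ⟨D, hD, hDe, hDY, hDP⟩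
    · rw [insert_union, ← union_insert, ← Finset.coe_insert] at hgs
      by_cases hgf : f ∈ Y ∨ 0 ≤ g f
      · refine Or.inl ⟨g, hg, hge, hgs, fun x hx ↦ ?_⟩
        rcases eq_or_ne x f with rfl | hxf
        · exact hgf.resolve_left hx
        · exact hgY x (by simp [hxf, hx])
      obtain ⟨-, hgf⟩ := not_or.1 hgf
      rcases ih heP heY with ⟨g', hg', hge', hgs', hgY'⟩ | ⟨D, hD, hDe, hDY, hDP⟩
      · refine Or.inl ⟨g', hg', hge', hgs'.trans ?_, hgY'⟩
        gcongr
        exact Finset.subset_insert f P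
      refine Or.inr ⟨D, hD, hDe, hDY, Finset.forall_mem_insert .. |>.2 ⟨?_, hDP⟩⟩
      refine h.apply_nonneg hg hD hge hDe (not_le.1 hgf) fun x hxe hxf ↦ ?_
      by_cases hxY : x ∈ Y
      · simp [hDY x hxY]
      by_cases hxg : g x = 0
      · simp [hxg]
      have hxP : x ∈ P := by simpa [hxe, hxf, hxY] using hgs hxg
      exact mul_nonneg (hgY x (by simp [hxf, hxY])) (hDP x hxP)
    · exact Or.inr ⟨D, hD, hDe, fun x hx ↦ hDY x (mem_insert_of_mem f hx),
        Finset.forall_mem_insert .. |>.2 ⟨(hDY f (mem_insert f Y)).ge, hDP⟩⟩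

/-- `Y` blocks the positive circuits through `e`: every signed circuit with value `1` at `e` is
negative somewhere outside `Y`. -/
structure IsBlocking (O : Set (α → ℤ)) (e : α) (Y : Set α) : Prop where
  notMem : e ∉ Y
  exists_neg : ∀ g ∈ O, g e = 1 → ∃ x ∉ Y, g x < 0

lemma exists_maximal_isBlocking (hO : ∀ g ∈ O, (support g).Finite)
    (hneg : ∀ g ∈ O, g e = 1 → ∃ x, g x < 0) : ∃ Y, Maximal (IsBlocking O e) Y := by
  suffices hchain : ∀ c ⊆ {Y | IsBlocking O e Y}, IsChain (· ⊆ ·) c → c.Nonempty →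
      IsBlocking O e (⋃₀ c) by
    obtain ⟨Y, -, hY⟩ := zorn_subset_nonempty {Y | IsBlocking O e Y}
      (fun c hcS hc hne ↦ ⟨⋃₀ c, hchain c hcS hc hne, fun _ ↦ subset_sUnion_of_mem⟩) ∅
      ⟨notMem_empty e, fun g hg hge ↦ by simpa using hneg g hg hge⟩
    exact ⟨Y, hY⟩
  refine fun c hcS hc hne ↦ ⟨fun ⟨s, hs, hes⟩ ↦ (hcS hs).notMem hes, fun g hg hge ↦ ?_⟩
  by_contra! hno
  have hfin : {x | g x < 0}.Finite := (hO g hg).subset fun x hx ↦ hx.ne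
  have hsub : {x | g x < 0} ⊆ ⋃₀ c := fun x hx ↦ by_contra fun hxc ↦ (hno x hxc).not_gt hx
  obtain ⟨s, hs, hss⟩ :=
    DirectedOn.exists_mem_subset_of_finite_of_subset_sUnion hne hc.directedOn hfin hsub
  obtain ⟨x, hx, hxg⟩ := (hcS hs).exists_neg g hg hge
  exact hx (hss hxg)

/-- `g` is a signed circuit with value `1` at `e` whose only negative element outside `Y` is `f`. It
is what keeps a maximal blocking set `Y` from absorbing `f`. -/
structure IsLinking (O : Set (α → ℤ)) (e : α) (Y : Set α) (f : α) (g : α → ℤ) : Prop where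
  mem : g ∈ O
  apply_left : g e = 1
  apply_right : g f = -1
  nonneg : ∀ x ∉ Y, x ≠ f → 0 ≤ g x

lemma IsLinking.ne {g : α → ℤ} (hg : IsLinking O e Y f g) : e ≠ f := by
  rintro rfl
  linarith [hg.apply_left, hg.apply_right]

lemma exists_isLinking_of_maximal (hO : ∀ g ∈ O, IsSignedSet g)
    (hY : Maximal (IsBlocking O e) Y) (hfY : f ∉ Y) (hfe : f ≠ e) :
    ∃ g, IsLinking O e Y f g := by
  by_contra! hno
  refine hfY (hY.le_of_ge (y := insert f Y) ⟨by simp [hfe.symm, hY.prop.notMem], ?_⟩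
    (subset_insert f Y) (mem_insert f Y))
  by_contra! ⟨g, hg, hge, hnn⟩
  have hnn' : ∀ x ∉ Y, x ≠ f → 0 ≤ g x := fun x hx hxf ↦ hnn x (by simp [hx, hxf])
  obtain ⟨x, hxY, hx⟩ := hY.prop.exists_neg g hg hge
  obtain rfl : x = f := by_contra fun hxf ↦ (hnn' x hxY hxf).not_gt hx
  exact hno g ⟨hg, hge, by rcases (hO g hg).eq_zero_or x with h | h | h <;> omega, hnn'⟩

variable [M.Finitary]

lemma IsBlocking.exists_cocircuit (hY : IsBlocking O e Y) (h : IsBinarySigning M O Ostar)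
    (he : e ∈ M.E) (P : Set α) (hP : P.Finite) :
    ∃ D ∈ Ostar, D e = 1 ∧ (∀ x ∈ Y, D x = 0) ∧ ∀ x ∈ P, 0 ≤ D x := by
  classical
  rcases h.exists_circuit_or_cocircuit_of_finset he
    (Finset.notMem_erase e hP.toFinset) hY.notMem with ⟨g, hg, hge, -, hgY⟩ | ⟨D, hD, hDe, hDY, hDP⟩
  · obtain ⟨x, hxY, hx⟩ := hY.exists_neg g hg hge
    exact absurd hx (hgY x hxY).not_gt
  refine ⟨D, hD, hDe, hDY, fun x hx ↦ ?_⟩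
  rcases eq_or_ne x e with rfl | hxe
  · exact hDe ▸ zero_le_one
  · exact hDP x (by simp [hxe, hx])

lemma IsLinking.sum_nonpos {g D : α → ℤ} (hg : IsLinking O e Y f g) (h : IsBinarySigning M O Ostar)
    (hD : D ∈ Ostar) (hDY : ∀ x ∈ Y, D x = 0) (hDg : ∀ x ∈ support g, 0 ≤ D x) {S : Finset α}
    (hfS : f ∈ S) : ∑ x ∈ S, g x * D x ≤ 0 := by
  refine h.sum_nonpos hg.mem hD S fun x hx ↦ ?_
  by_cases hxY : x ∈ Y
  · simp [hDY x hxY]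
  by_cases hxg : g x = 0
  · simp [hxg]
  · exact mul_nonneg (hg.nonneg x hxY fun hxf ↦ hx (hxf ▸ hfS)) (hDg x hxg)

lemma IsLinking.apply_eq_zero {g g' : α → ℤ} {f' : α} (hg : IsLinking O e Y f g)
    (hg' : IsLinking O e Y f' g') (hY : IsBlocking O e Y) (h : IsBinarySigning M O Ostar)
    (he : e ∈ M.E) (hfY' : f' ∉ Y) (hff : f ≠ f') : g f' = 0 := by
  classical
  obtain ⟨D, hD, hDe, hDY, hDnn⟩ := hY.exists_cocircuit h he _
    ((h.finite_support hg.mem).union (h.finite_support hg'.mem))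
  have hDf : D f ≤ 1 := by rcases (h.cocircuit.signed D hD).eq_zero_or f with h | h | h <;> omega
  have hDf' : 1 ≤ D f' := by
    have := hg'.sum_nonpos h hD hDY (fun x hx ↦ hDnn x (Or.inr hx)) (S := {e, f'}) (by simp)
    rw [Finset.sum_pair hg'.ne, hg'.apply_left, hg'.apply_right, hDe] at this
    omega
  have hsum := hg.sum_nonpos h hD hDY (fun x hx ↦ hDnn x (Or.inl hx)) (S := {e, f, f'}) (by simp)
  rw [Finset.sum_insert (by simp [hg.ne, hg'.ne]), Finset.sum_pair hff, hg.apply_left,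
    hg.apply_right, hDe] at hsum
  nlinarith [hg.nonneg f' hfY' hff.symm]

lemma IsBinarySigning.exists_nonneg_circuit_or_cocircuit (h : IsBinarySigning M O Ostar)
    (he : e ∈ M.E) :
    (∃ g ∈ O, g e = 1 ∧ ∀ x, 0 ≤ g x) ∨ ∃ D ∈ Ostar, D e = 1 ∧ ∀ x, 0 ≤ D x := by
  refine or_iff_not_imp_left.2 fun hneg ↦ ?_
  push Not at hneg
  obtain ⟨Y, hmax⟩ := exists_maximal_isBlocking (fun _ ↦ h.finite_support) hneg
  have hY := hmax.prop
  obtain ⟨D, hD, hDe, hDY, -⟩ := hY.exists_cocircuit h he ∅ finite_empty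
  refine ⟨D, hD, hDe, fun x ↦ ?_⟩
  by_cases hxY : x ∈ Y
  · exact (hDY x hxY).ge
  rcases eq_or_ne x e with rfl | hxe
  · exact hDe ▸ zero_le_one
  obtain ⟨g, hg⟩ := exists_isLinking_of_maximal h.circuit.signed hmax hxY hxe
  have hpair := h.add_nonpos hg.mem hD hg.ne fun y hye hyx ↦ by
    by_cases hyY : y ∈ Y
    · simp [hDY y hyY]
    obtain ⟨g', hg'⟩ := exists_isLinking_of_maximal h.circuit.signed hmax hyY hye
    simp [hg.apply_eq_zero hg' hY h he hyY hyx.symm]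
  rw [hg.apply_left, hg.apply_right, hDe] at hpair
  omega

lemma IsBinarySigning.exists_isPositive (h : IsBinarySigning M O Ostar) (hbal : IsBalanced Ostar)
    (he : e ∈ M.E) : ∃ g ∈ O, IsPositive g ∧ e ∈ support g := by
  rcases h.exists_nonneg_circuit_or_cocircuit he with ⟨g, hg, hge, hnn⟩ | ⟨D, hD, hDe, hnn⟩
  · exact ⟨g, hg, (h.circuit.signed g hg).isPositive hnn, by simp [hge]⟩
  · have hneg : {x | D x = -1} = ∅ := eq_empty_of_forall_notMem fun x hx ↦ by
      linarith [hnn x, mem_ofPred.1 hx]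
    have hpos : {x | D x = 1} = ∅ := by
      rw [← Cardinal.mk_set_eq_zero_iff, hbal D hD, hneg, Cardinal.mk_set_eq_zero_iff]
    exact absurd hDe (eq_empty_iff_forall_notMem.1 hpos e)

end Minty

section Cardinality

open Cardinal

variable {g D : α → ℤ}

lemma IsPositive.mk_inter_support_eq (hg : IsPositive g) (hfin : (support g).Finite)
    (hD : IsSignedSet D) (h : ∑ᶠ e, g e * D e = 0) :
    #(({e | D e = 1} ∩ support g : Set α)) = #(({e | D e = -1} ∩ support g : Set α)) := by
  classical
  lift support g to Finset α using hfin with s hs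
  have hcoe (c : ℤ) : ({e | D e = c} ∩ s : Set α) = s.filter (D · = c) := by
    ext e
    simp [and_comm]
  have hsum : ∑ᶠ e, g e * D e =
      ∑ e ∈ s, ((if D e = 1 then 1 else 0) - if D e = -1 then 1 else 0) := by
    rw [finsum_eq_sum_of_support_subset (s := s) _ (hs ▸ support_mul_subset_left g D)]
    refine Finset.sum_congr rfl fun e he ↦ ?_
    rw [hg e (hs ▸ he), one_mul]
    rcases hD.eq_zero_or e with h | h | h <;> simp [h]
  rw [h, Finset.sum_sub_distrib, eq_comm, sub_eq_zero, ← Finset.natCast_card_filter,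
    ← Finset.natCast_card_filter, Nat.cast_inj] at hsum
  simp only [hcoe, Finset.coe_sort_coe, mk_coe_finset, hsum]

lemma IsSignedSet.even_ncard_support_inter (hg : IsSignedSet g) (hfin : (support g).Finite)
    (hD : IsSignedSet D) (h : ∑ᶠ e, g e * D e = 0) : Even (support g ∩ support D).ncard := by
  have hfin' : (support g ∩ support D).Finite := hfin.subset inter_subset_left
  rw [← ZMod.natCast_eq_zero_iff_even, ncard_eq_toFinset_card _ hfin', ← Int.cast_zero, ← h,
    finsum_eq_sum_of_support_subset (s := hfin'.toFinset) _ (by simp [support_mul]),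
    Finset.card_eq_sum_ones, Nat.cast_sum, Int.cast_sum]
  refine Finset.sum_congr rfl fun e he ↦ ?_
  obtain ⟨hge, hDe⟩ := hfin'.mem_toFinset.1 he
  rcases hg e hge with h | h <;> rcases hD e hDe with h' | h' <;> rw [h, h'] <;> decide

lemma odd_ncard_inter_of_even {C K N : Set α} {e : α} (hC : C.Finite) (he : C ∩ (K \ N) = {e})
    (h : Even (C ∩ K).ncard) : Odd (C ∩ N ∩ K).ncard := by
  have hsplit := ncard_inter_add_ncard_sdiff_eq_ncard (C ∩ K) N (hC.subset inter_subset_left)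
  rw [← inter_sdiff_assoc] at he
  rw [he, ncard_singleton, inter_right_comm] at hsplit
  rw [← hsplit, Nat.even_add_one] at h
  exact Nat.not_even_iff_odd.1 h

lemma mk_le_of_pairwiseDisjoint_of_inter_nonempty {F : Set (Set α)} {K : Set α}
    (hF : F.PairwiseDisjoint id) (hFK : ∀ s ∈ F, (s ∩ K).Nonempty) : #F ≤ #K := by
  choose f hfs hfK using fun s : F ↦ hFK s s.2
  refine mk_le_of_injective (f := fun s : F ↦ (⟨f s, hfK s⟩ : K)) fun s s' hss' ↦ ?_
  refine Subtype.ext (hF.elim_set s.2 s'.2 (f s) (hfs s) ?_)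
  have hval : f s = f s' := Subtype.ext_iff.1 hss'
  exact hval ▸ hfs s'

lemma mk_sdiff_eq_of_lt {S N : Set α} {κ : Cardinal} (hκ : ℵ₀ ≤ κ) (hN : #N ≤ κ) (hS : κ < #S) :
    #(S \ N : Set α) = #S := by
  refine (mk_le_mk_of_subset sdiff_subset).antisymm (le_of_not_gt fun hlt ↦ ?_)
  exact ((le_mk_sdiff_add_mk S N).trans_lt
    (add_lt_of_lt (hκ.trans hS.le) hlt (hN.trans_lt hS))).false

lemma IsSignedSet.lt_mk_eq_one (hD : IsSignedSet D) (hbal : #{e | D e = 1} = #{e | D e = -1})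
    {κ : Cardinal} (hκ : ℵ₀ ≤ κ) (h : κ < #(support D)) : κ < #{e | D e = 1} := by
  by_contra! hle
  have hunion : support D ⊆ {e | D e = 1} ∪ {e | D e = -1} := hD
  exact ((mk_le_mk_of_subset hunion).trans (mk_union_le _ _)).not_gt
    ((add_le_of_le hκ hle (hbal ▸ hle)).trans_lt h)

end Cardinality

section Deletion

open Cardinal Matroid

/-- The signed sets of `O` whose domains avoid `X`: the signed circuits of the deletion of `X`. -/
def avoiding (O : Set (α → ℤ)) (X : Set α) : Set (α → ℤ) :=
  {g ∈ O | Disjoint (support g) X}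

/-- The restrictions of the signed cocircuits in `Ostar` to the complement of `X` whose domains are
cocircuits of `M ＼ X`: a signing of the cocircuits of the deletion. -/
def cocircuitTraces (M : Matroid α) (Ostar : Set (α → ℤ)) (X : Set α) : Set (α → ℤ) :=
  {D | (∃ D' ∈ Ostar, Xᶜ.indicator D' = D) ∧ (M ＼ X).IsCocircuit (support D)}

variable {M : Matroid α} {O Ostar : Set (α → ℤ)} {g : α → ℤ} {X Y N : Set α}

lemma avoiding_empty : avoiding O ∅ = O := by
  simp [avoiding]

lemma avoiding_avoiding : avoiding (avoiding O X) Y = avoiding O (X ∪ Y) := by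
  ext g
  simp [avoiding, and_assoc]

lemma IsBinarySigning.exists_signing_of_delete_isCocircuit (h : IsBinarySigning M O Ostar)
    {K : Set α} (hK : (M ＼ X).IsCocircuit K) : ∃ D ∈ Ostar, Xᶜ ∩ support D = K := by
  have hKX : Disjoint K X := (subset_sdiff.1 hK.subset_ground).2
  rw [Matroid.isCocircuit_def, Matroid.dual_delete] at hK
  obtain ⟨K', hK', hKK', hK'K⟩ := hK.exists_subset_isCircuit_of_contract
  obtain ⟨D, hD, rfl⟩ := h.cocircuit.exists_signing K' hK'
  refine ⟨D, hD, subset_antisymm ?_ (subset_inter hKX.subset_compl_right hKK')⟩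
  exact fun x hx ↦ (hK'K hx.2).resolve_right hx.1

lemma IsBinarySigning.delete (h : IsBinarySigning M O Ostar) (X : Set α) :
    IsBinarySigning (M ＼ X) (avoiding O X) (cocircuitTraces M Ostar X) where
  circuit :=
    { signed := fun g hg ↦ h.circuit.signed g hg.1
      dom_mem := fun g hg ↦ Matroid.delete_isCircuit_iff.2 ⟨h.circuit.dom_mem g hg.1, hg.2⟩
      exists_signing := fun C hC ↦ by
        obtain ⟨hC, hCX⟩ := Matroid.delete_isCircuit_iff.1 hC
        obtain ⟨g, hg, rfl⟩ := h.circuit.exists_signing C hC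
        exact ⟨g, ⟨hg, hCX⟩, rfl⟩
      neg_mem := fun g hg ↦ ⟨h.circuit.neg_mem g hg.1, by simpa using hg.2⟩ }
  cocircuit :=
    { signed := by
        rintro _ ⟨⟨D, hD, rfl⟩, -⟩
        exact (h.cocircuit.signed D hD).indicator _
      dom_mem := fun D hD ↦ hD.2
      exists_signing := fun K hK ↦ by
        obtain ⟨D, hD, hDK⟩ := h.exists_signing_of_delete_isCocircuit hK
        rw [← support_indicator] at hDK
        exact ⟨_, ⟨⟨D, hD, rfl⟩, hDK.symm ▸ hK⟩, hDK⟩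
      neg_mem := by
        rintro _ ⟨⟨D, hD, rfl⟩, hcirc⟩
        exact ⟨⟨-D, h.cocircuit.neg_mem D hD, indicator_neg' _ D⟩, by simpa using hcirc⟩ }
  orthogonal := by
    rintro g ⟨hg, hgX⟩ _ ⟨⟨D, hD, rfl⟩, -⟩
    rw [← h.orthogonal g hg D hD]
    refine finsum_congr fun x ↦ ?_
    by_cases hx : x ∈ X
    · simp [notMem_support.1 (disjoint_right.1 hgX hx)]
    · simp [hx]

lemma isBalanced_cocircuitTraces
    (h : ∀ D ∈ Ostar, #({e | D e = 1} \ X : Set α) = #({e | D e = -1} \ X : Set α)) :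
    IsBalanced (cocircuitTraces M Ostar X) := by
  rintro _ ⟨⟨D, hD, rfl⟩, -⟩
  have hfiber (c : ℤ) (hc : c ≠ 0) : {e | Xᶜ.indicator D e = c} = {e | D e = c} \ X := by
    ext e
    by_cases he : e ∈ X <;> simp [he, hc.symm]
  rw [hfiber 1 one_ne_zero, hfiber (-1) (by simp), h D hD]

lemma IsBinarySigning.isBalanced_delete_support [M.Finitary] (h : IsBinarySigning M O Ostar)
    (hbal : IsBalanced Ostar) (hg : g ∈ O) (hpos : IsPositive g) :
    IsBalanced (cocircuitTraces M Ostar (support g)) := by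
  refine isBalanced_cocircuitTraces fun D hD ↦ ?_
  have hmeet := hpos.mk_inter_support_eq (h.finite_support hg) (h.cocircuit.signed D hD)
    (h.orthogonal g hg D hD)
  have hsplit (c : ℤ) : #{e | D e = c} = #({e | D e = c} \ support g : Set α) +
      #({e | D e = c} ∩ support g : Set α) := by
    rw [← mk_union_of_disjoint disjoint_sdiff_inter, sdiff_union_inter]
  have hD := hbal D hD
  rw [hsplit, hsplit, hmeet] at hD
  exact Cardinal.eq_of_add_eq_add_right hD
    (lt_aleph0_iff_set_finite.2 ((h.finite_support hg).subset inter_subset_right))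

/-- There are more than `κ` pairwise disjoint sets each of which completes `t` to a circuit. -/
def HasManyCompletions (M : Matroid α) (t : Set α) (κ : Cardinal) : Prop :=
  ∃ F : Set (Set α), κ < #F ∧ F.PairwiseDisjoint id ∧ ∀ s ∈ F, M.IsCircuit (t ∪ s)

/-- Every finite part of `N` that some nonempty set outside `N` completes to a circuit has more than
`κ` disjoint completions. -/
def IsCompletionClosed (M : Matroid α) (N : Set α) (κ : Cardinal) : Prop :=
  ∀ t ⊆ N, t.Finite → ∀ s, s.Nonempty → Disjoint s N → M.IsCircuit (t ∪ s) →
    HasManyCompletions M t κ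

lemma exists_isCircuit_inter_sdiff_eq_singleton {K : Set α} {e : α} (hK : M.IsCocircuit K)
    (hKN : (K ∩ N).Nonempty) (he : e ∈ K \ N) : ∃ C, M.IsCircuit C ∧ C ∩ (K \ N) = {e} := by
  have hss : K \ N ⊂ K := sdiff_ssubset_left_iff.2 hKN
  obtain ⟨C, hC, hCe⟩ := (hK.isCircuit.ssubset_indep hss).exists_isCocircuit_inter_eq_mem he
  exact ⟨C, by simpa [Matroid.isCocircuit_def] using hC, hCe⟩

lemma IsBinarySigning.even_ncard_inter [M.Finitary] (h : IsBinarySigning M O Ostar) {C : Set α}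
    (hC : M.IsCircuit C) {D : α → ℤ} (hD : D ∈ Ostar) : Even (C ∩ support D).ncard := by
  obtain ⟨g, hg, rfl⟩ := h.circuit.exists_signing C hC
  exact (h.circuit.signed g hg).even_ncard_support_inter (h.finite_support hg)
    (h.cocircuit.signed D hD) (h.orthogonal g hg D hD)

lemma IsBinarySigning.lt_mk_support [M.Finitary] (h : IsBinarySigning M O Ostar) {κ : Cardinal}
    {t : Set α} (ht : HasManyCompletions M t κ) {D : α → ℤ} (hD : D ∈ Ostar)
    (hodd : Odd (t ∩ support D).ncard) : κ < #(support D) := by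
  obtain ⟨F, hκF, hdisj, hcirc⟩ := ht
  refine hκF.trans_le (mk_le_of_pairwiseDisjoint_of_inter_nonempty hdisj fun s hs ↦ ?_)
  by_contra hempty
  have heven := h.even_ncard_inter (hcirc s hs) hD
  rw [union_inter_distrib_right, not_nonempty_iff_eq_empty.1 hempty, union_empty] at heven
  exact Nat.not_even_iff_odd.2 hodd heven

lemma IsBinarySigning.isBalanced_delete_of_isCompletionClosed [M.Finitary]
    (h : IsBinarySigning M O Ostar) (hbal : IsBalanced Ostar) {κ : Cardinal} (hκ : ℵ₀ ≤ κ)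
    (hN : #N ≤ κ) (hcl : IsCompletionClosed M N κ) :
    IsBalanced (cocircuitTraces M Ostar N) := by
  refine isBalanced_cocircuitTraces fun D hD ↦ ?_
  have hsub : ∀ c : ℤ, c ≠ 0 → {e | D e = c} ⊆ support D := fun c hc e he ↦ by simp_all
  rcases (support D \ N).eq_empty_or_nonempty with hDN | ⟨e, he⟩
  · rw [sdiff_eq_empty] at hDN
    rw [sdiff_eq_empty.2 ((hsub 1 one_ne_zero).trans hDN),
      sdiff_eq_empty.2 ((hsub (-1) (by simp)).trans hDN)]
  rcases (support D ∩ N).eq_empty_or_nonempty with hDN | hDN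
  · have hdisj := disjoint_iff_inter_eq_empty.2 hDN
    rw [(hdisj.mono_left (hsub 1 one_ne_zero)).sdiff_eq_left,
      (hdisj.mono_left (hsub (-1) (by simp))).sdiff_eq_left, hbal D hD]
  obtain ⟨C, hC, hCe⟩ :=
    exists_isCircuit_inter_sdiff_eq_singleton (h.cocircuit.dom_mem D hD) hDN he
  have heC : e ∈ C := (hCe.ge rfl).1
  have hmany : HasManyCompletions M (C ∩ N) κ :=
    hcl _ inter_subset_right (hC.finite.subset inter_subset_left) (C \ N) ⟨e, heC, he.2⟩
      disjoint_sdiff_left (by rwa [inter_union_sdiff])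
  have hlarge := (h.cocircuit.signed D hD).lt_mk_eq_one (hbal D hD) hκ <|
    h.lt_mk_support hmany hD (odd_ncard_inter_of_even hC.finite hCe (h.even_ncard_inter hC hD))
  rw [mk_sdiff_eq_of_lt hκ hN hlarge, mk_sdiff_eq_of_lt hκ hN (hbal D hD ▸ hlarge), hbal D hD]

/-- `O` is one half of a binary signing of `M` whose cocircuit half is balanced. Leaving the
cocircuit half existential lets successive deletions be composed without comparing the
corresponding traces. -/
def IsBalanceable (M : Matroid α) (O : Set (α → ℤ)) : Prop :=
  ∃ Ostar, IsBinarySigning M O Ostar ∧ IsBalanced Ostar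

end Deletion

section DirectedPartition

open Cardinal

variable {M : Matroid α} {O O' Ostar : Set (α → ℤ)} {g : α → ℤ} {N N' : Set α}

/-- `N` can be partitioned into directed circuits: it is the disjoint union of the domains of some
positive members of `O`. -/
def HasDirectedPartition (O : Set (α → ℤ)) (N : Set α) : Prop :=
  ∃ 𝒜 ⊆ O, (∀ C ∈ 𝒜, IsPositive C) ∧
    𝒜.Pairwise (fun C C' ↦ Disjoint (support C) (support C')) ∧ ⋃ C ∈ 𝒜, support C = N

lemma HasDirectedPartition.mono (h : HasDirectedPartition O N) (hO : O ⊆ O') :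
    HasDirectedPartition O' N := by
  obtain ⟨𝒜, h𝒜, h⟩ := h
  exact ⟨𝒜, h𝒜.trans hO, h⟩

lemma hasDirectedPartition_empty (O : Set (α → ℤ)) : HasDirectedPartition O ∅ :=
  ⟨∅, empty_subset O, by simp, pairwise_empty _, by simp⟩

lemma IsPositive.hasDirectedPartition (hpos : IsPositive g) (hg : g ∈ O) :
    HasDirectedPartition O (support g) :=
  ⟨{g}, by simpa, by simpa, pairwise_singleton _ _, by simp⟩

lemma HasDirectedPartition.iUnion {ι : Type*} {A : ι → Set α}
    (h : ∀ i, HasDirectedPartition O (A i)) (hd : Pairwise (Disjoint on A)) :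
    HasDirectedPartition O (⋃ i, A i) := by
  choose 𝒜 h𝒜 hpos hpw hA using h
  have hsub {i : ι} {C : α → ℤ} (hC : C ∈ 𝒜 i) : support C ⊆ A i :=
    hA i ▸ subset_biUnion_of_mem (u := support) hC
  refine ⟨⋃ i, 𝒜 i, iUnion_subset h𝒜, fun C hC ↦ ?_, fun C hC C' hC' hne ↦ ?_, ?_⟩
  · obtain ⟨i, hi⟩ := mem_iUnion.1 hC
    exact hpos i C hi
  · obtain ⟨i, hi⟩ := mem_iUnion.1 hC
    obtain ⟨j, hj⟩ := mem_iUnion.1 hC'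
    rcases eq_or_ne i j with rfl | hij
    · exact hpw i hi hj hne
    · exact (hd hij).mono (hsub hi) (hsub hj)
  · rw [biUnion_iUnion]
    exact iUnion_congr hA

lemma HasDirectedPartition.union (h : HasDirectedPartition O N) (h' : HasDirectedPartition O N')
    (hd : Disjoint N N') : HasDirectedPartition O (N ∪ N') := by
  rw [union_eq_iUnion]
  refine .iUnion (Bool.forall_bool.2 ⟨h', h⟩) ?_
  rw [pairwise_disjoint_on_bool]
  exact hd

lemma IsBinarySigning.isBalanced_of_hasDirectedPartition [M.Finitary]
    (h : IsBinarySigning M O Ostar) (hpart : HasDirectedPartition O M.E) : IsBalanced Ostar := by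
  obtain ⟨𝒜, h𝒜, hpos, hdisj, hE⟩ := hpart
  intro D hD
  have hfiber (c : ℤ) (hc : c ≠ 0) :
      Cardinal.lift #{e | D e = c} = sum fun C : 𝒜 ↦ #({e | D e = c} ∩ support C.1 : Set α) := by
    have hcover : {e | D e = c} = ⋃ C : 𝒜, {e | D e = c} ∩ support C.1 := by
      rw [← inter_iUnion, ← biUnion_eq_iUnion 𝒜 fun C _ ↦ support C, hE, eq_comm,
        inter_eq_left]
      intro e he
      exact (h.cocircuit.dom_mem D hD).subset_ground (mem_support.2 (mem_ofPred.1 he ▸ hc))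
    rw [← Cardinal.mk_iUnion_eq_sum_mk_lift, ← hcover]
    exact fun C C' hne ↦ (hdisj C.2 C'.2 (Subtype.coe_ne_coe.2 hne)).mono inter_subset_right
      inter_subset_right
  rw [← Cardinal.lift_inj, hfiber 1 one_ne_zero, hfiber (-1) (by simp)]
  congr 1
  ext C
  exact (hpos C C.2).mk_inter_support_eq (h.finite_support (h𝒜 C.2)) (h.cocircuit.signed D hD)
    (h.orthogonal C (h𝒜 C.2) D hD)

end DirectedPartition

section Peeling

open Matroid

variable {M : Matroid α} {O : Set (α → ℤ)} {A X Z : Set α}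

/-- `N` can be split off from `M` as a disjoint union of directed circuits so that a balanced
orientation of the deletion remains. -/
structure IsPeelable (M : Matroid α) (O : Set (α → ℤ)) (N : Set α) : Prop where
  subset_ground : N ⊆ M.E
  hasDirectedPartition : HasDirectedPartition O N
  isBalanceable : IsBalanceable (M ＼ N) (avoiding O N)

lemma IsBalanceable.isPeelable_empty (h : IsBalanceable M O) : IsPeelable M O ∅ :=
  ⟨empty_subset M.E, hasDirectedPartition_empty O, by rwa [delete_empty, avoiding_empty]⟩

lemma IsPeelable.disjoint_of_delete (hZ : IsPeelable (M ＼ X) (avoiding O X) Z) : Disjoint X Z :=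
  (subset_sdiff.1 hZ.subset_ground).2.symm

lemma IsPeelable.union (hX : IsPeelable M O X) (hZ : IsPeelable (M ＼ X) (avoiding O X) Z) :
    IsPeelable M O (X ∪ Z) where
  subset_ground := union_subset hX.subset_ground (hZ.subset_ground.trans sdiff_subset)
  hasDirectedPartition := hX.hasDirectedPartition.union
    (hZ.hasDirectedPartition.mono (sep_subset _ _)) hZ.disjoint_of_delete
  isBalanceable := by
    rw [← delete_delete, ← avoiding_avoiding]
    exact hZ.isBalanceable

lemma IsBalanceable.exists_isPeelable_singleton [M.Finitary] (h : IsBalanceable M O) {a : α}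
    (ha : a ∈ M.E) : ∃ N, N.Finite ∧ a ∈ N ∧ IsPeelable M O N := by
  obtain ⟨Ostar, h, hbal⟩ := h
  obtain ⟨g, hg, hpos, hag⟩ := h.exists_isPositive hbal ha
  exact ⟨support g, h.finite_support hg, hag, (h.circuit.dom_mem g hg).subset_ground,
    hpos.hasDirectedPartition hg, _, h.delete _, h.isBalanced_delete_support hbal hg hpos⟩

lemma IsBalanceable.exists_isPeelable_of_finite [M.Finitary] (h : IsBalanceable M O) (hA : A.Finite)
    (hAE : A ⊆ M.E) : ∃ N, N.Finite ∧ A ⊆ N ∧ IsPeelable M O N := by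
  induction A, hA using Set.Finite.induction_on with
  | empty => exact ⟨∅, finite_empty, Subset.rfl, h.isPeelable_empty⟩
  | @insert a A _ _ ih =>
    obtain ⟨haE, hAE⟩ := insert_subset_iff.1 hAE
    obtain ⟨N, hN, hAN, hpeel⟩ := ih hAE
    by_cases haN : a ∈ N
    · exact ⟨N, hN, insert_subset haN hAN, hpeel⟩
    obtain ⟨Z, hZ, haZ, hpeelZ⟩ := hpeel.isBalanceable.exists_isPeelable_singleton ⟨haE, haN⟩
    exact ⟨N ∪ Z, hN.union hZ, insert_subset (Or.inr haZ) (hAN.trans subset_union_left),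
      hpeel.union hpeelZ⟩

end Peeling

section Small

universe u

open Cardinal Order

variable {α : Type u} {κ μ : Cardinal.{u}} {X Y : Set α}

/-- `X` is finite or has at most `κ` elements. The bound is written as a regular cardinal, so that
small unions of small sets are small. -/
def IsSmall (κ : Cardinal.{u}) (X : Set α) : Prop :=
  #X < max ℵ₀ (succ κ)

lemma isRegular_max_aleph0_succ (κ : Cardinal) : (max ℵ₀ (succ κ)).IsRegular := by
  rcases le_or_gt ℵ₀ κ with hκ | hκ
  · rw [max_eq_right (hκ.trans (le_succ κ))]
    exact isRegular_succ hκ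
  · rw [max_eq_left (succ_le_of_lt hκ)]
    exact isRegular_aleph0

lemma isSmall_of_finite (hX : X.Finite) : IsSmall κ X :=
  hX.lt_aleph0.trans_le (le_max_left _ _)

lemma IsSmall.mk_le (hX : IsSmall κ X) (hκ : ℵ₀ ≤ κ) : #X ≤ κ := by
  rwa [IsSmall, max_eq_right (hκ.trans (le_succ κ)), lt_succ_iff] at hX

lemma IsSmall.mk_lt (hX : IsSmall κ X) (hμ : ℵ₀ ≤ μ) (hκ : κ < μ) : #X < μ :=
  hX.trans_le (max_le hμ (succ_le_of_lt hκ))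

lemma IsSmall.mono (hX : IsSmall κ X) (hκ : κ ≤ μ) : IsSmall μ X :=
  hX.trans_le (max_le_max_left _ (succ_le_succ hκ))

lemma IsSmall.subset (hX : IsSmall κ X) (hY : Y ⊆ X) : IsSmall κ Y :=
  (mk_le_mk_of_subset hY).trans_lt hX

lemma IsSmall.of_isSmall_mk (hX : IsSmall #Y X) (hY : IsSmall κ Y) : IsSmall κ X :=
  hX.trans_le (max_le (le_max_left _ _) (succ_le_of_lt hY))

lemma isSmall_iUnion {ι : Type u} {A : ι → Set α} (hι : #ι < max ℵ₀ (succ κ))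
    (h : ∀ i, IsSmall κ (A i)) : IsSmall κ (⋃ i, A i) :=
  (card_iUnion_lt_iff_forall_of_isRegular (isRegular_max_aleph0_succ κ) hι).2 h

lemma isSmall_iUnion_Iio {j : Ordinal.{u}} {A : Iio j → Set α} (hj : j.card ≤ κ)
    (h : ∀ k, IsSmall κ (A k)) : IsSmall κ (⋃ k, A k) := by
  rw [← Ordinal.ToType.mk.symm.surjective.iUnion_comp]
  refine isSmall_iUnion ?_ fun k ↦ h _
  rw [mk_toType]
  exact (lt_succ_of_le hj).trans_le (le_max_right _ _)

lemma IsSmall.mk_finset (hX : IsSmall κ X) : #(Finset X) < max ℵ₀ (succ κ) := by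
  rcases finite_or_infinite X with hfin | hinf
  · exact (lt_aleph0_of_finite _).trans_le (le_max_left _ _)
  · rwa [mk_finset_of_infinite]

lemma exists_ordinal_enumeration (S : Set α) (d : α) : ∃ f : Ordinal.{u} → α,
    (∀ k, f k ∈ insert d S) ∧ ∀ s ∈ S, ∃ k < (#S).ord, f k = s := by
  classical
  obtain ⟨e⟩ : Nonempty (Iio (#S).ord ≃ S) := by
    rw [← Cardinal.lift_mk_eq', mk_Iio_ordinal]
    simp
  refine ⟨fun k ↦ if hk : k < (#S).ord then e ⟨k, hk⟩ else d, fun k ↦ ?_, fun s hs ↦ ?_⟩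
  · by_cases hk : k < (#S).ord <;> simp [hk]
  · have hk : ↑(e.symm ⟨s, hs⟩) < (#S).ord := (e.symm ⟨s, hs⟩).2
    exact ⟨e.symm ⟨s, hs⟩, hk, by simp only [hk, ↓reduceDIte, e.apply_symm_apply]⟩

end Small

section TransfiniteUnion

universe u

variable {α : Type*} {G : Ordinal.{u} → Set α → Set α} {i j : Ordinal.{u}}

/-- The increasing union of the sets produced by the rule `G`: at stage `j` the set
`G j (transfiniteUnion G j)` is added to the union of those produced before. -/
noncomputable def transfiniteUnion (G : Ordinal.{u} → Set α → Set α) (i : Ordinal.{u}) : Set α :=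
  ⋃ j : Iio i, G j (transfiniteUnion G j)
termination_by i
decreasing_by exact j.2

lemma mem_transfiniteUnion {x : α} :
    x ∈ transfiniteUnion G i ↔ ∃ j < i, x ∈ G j (transfiniteUnion G j) := by
  rw [transfiniteUnion]
  simp

lemma subset_transfiniteUnion (h : j < i) : G j (transfiniteUnion G j) ⊆ transfiniteUnion G i :=
  fun _ hx ↦ mem_transfiniteUnion.2 ⟨j, h, hx⟩

lemma transfiniteUnion_mono (h : j ≤ i) : transfiniteUnion G j ⊆ transfiniteUnion G i := by
  intro x hx
  obtain ⟨k, hk, hx⟩ := mem_transfiniteUnion.1 hx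
  exact mem_transfiniteUnion.2 ⟨k, hk.trans_le h, hx⟩

lemma transfiniteUnion_zero : transfiniteUnion G 0 = ∅ := by
  ext x
  simp [mem_transfiniteUnion]

lemma transfiniteUnion_succ : transfiniteUnion G (Order.succ j) =
    transfiniteUnion G j ∪ G j (transfiniteUnion G j) := by
  ext x
  simp only [mem_union, mem_transfiniteUnion, Order.lt_succ_iff, le_iff_lt_or_eq, or_and_right,
    exists_or, exists_eq_left]

lemma exists_finset_subset_transfiniteUnion (hi : Order.IsSuccLimit i) {t : Finset α}
    (ht : ↑t ⊆ transfiniteUnion G i) : ∃ j < i, ↑t ⊆ transfiniteUnion G j := by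
  choose! j hj hxj using fun x (hx : x ∈ t) ↦ mem_transfiniteUnion.1 (ht hx)
  refine ⟨t.sup fun x ↦ Order.succ (j x), ?_, fun x hx ↦ ?_⟩
  · exact (Finset.sup_lt_iff hi.bot_lt).2 fun x hx ↦ hi.succ_lt (hj x hx)
  · exact transfiniteUnion_mono (Finset.le_sup (f := fun x ↦ Order.succ (j x)) hx)
      (subset_transfiniteUnion (Order.lt_succ _) (hxj x hx))

lemma isSmall_transfiniteUnion {α : Type u} {G : Ordinal.{u} → Set α → Set α} {i : Ordinal.{u}}
    (h : ∀ j < i, IsSmall j.card (G j (transfiniteUnion G j))) :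
    IsSmall i.card (transfiniteUnion G i) := by
  rw [transfiniteUnion]
  exact isSmall_iUnion_Iio le_rfl fun j ↦ (h j j.2).mono (Ordinal.card_le_card j.2.le)

lemma hasDirectedPartition_transfiniteUnion {O : Set (α → ℤ)}
    (h : ∀ j < i, HasDirectedPartition O (G j (transfiniteUnion G j)))
    (hd : ∀ j < i, Disjoint (transfiniteUnion G j) (G j (transfiniteUnion G j))) :
    HasDirectedPartition O (transfiniteUnion G i) := by
  rw [transfiniteUnion]
  refine .iUnion (fun j ↦ h j j.2) fun j k hjk ↦ ?_
  rcases lt_or_gt_of_ne hjk with hlt | hlt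
  · exact (hd k k.2).mono_left (subset_transfiniteUnion hlt)
  · exact ((hd j j.2).mono_left (subset_transfiniteUnion hlt)).symm

end TransfiniteUnion

section Completions

universe u

open Matroid Cardinal

variable {α : Type u} {M : Matroid α} {i j : Ordinal.{u}} {X : Set α}

lemma exists_maximal_completions (M : Matroid α) (t : Set α) :
    ∃ F : Set (Set α), F.PairwiseDisjoint id ∧ (∀ s ∈ F, M.IsCircuit (t ∪ s)) ∧
      ∀ s, s.Nonempty → M.IsCircuit (t ∪ s) → ∃ s' ∈ F, (s ∩ s').Nonempty := by
  obtain ⟨F, hF⟩ := zorn_subset {F : Set (Set α) | F.PairwiseDisjoint id ∧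
    ∀ s ∈ F, M.IsCircuit (t ∪ s)} fun c hc hch ↦ ⟨⋃₀ c,
      ⟨(pairwiseDisjoint_sUnion hch.directedOn).2 fun F hF ↦ (hc hF).1,
        fun s ⟨F, hF, hs⟩ ↦ (hc hF).2 s hs⟩, fun _ ↦ subset_sUnion_of_mem⟩
  refine ⟨F, hF.prop.1, hF.prop.2, fun s hs hcirc ↦ ?_⟩
  by_contra! hno
  have hsF : s ∈ F := hF.le_of_ge (y := insert s F)
    ⟨hF.prop.1.insert fun s' hs' _ ↦ disjoint_iff_inter_eq_empty.2 (hno s' hs'),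
      forall_mem_insert.2 ⟨hcirc, hF.prop.2⟩⟩ (subset_insert s F) (mem_insert s F)
  exact hs.ne_empty (by simpa using hno s hsF)

/-- `f` lists finite sets meeting all completions of `t` to a circuit, in the following sense:
unless `t` has more than `|i|` disjoint completions, every completion meets one of the first `i`
sets. -/
structure EnumeratesCompletions (M : Matroid α) (t : Set α) (f : Ordinal.{u} → Set α) : Prop where
  finite : ∀ k, (f k).Finite
  subset_ground : ∀ k, f k ⊆ M.E
  exists_inter_nonempty : ∀ i : Ordinal.{u}, ¬ HasManyCompletions M t i.card →
    ∀ s, s.Nonempty → M.IsCircuit (t ∪ s) → ∃ k < i, (s ∩ f k).Nonempty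

lemma exists_enumeratesCompletions (M : Matroid α) [M.Finitary] (t : Set α) :
    ∃ f, EnumeratesCompletions M t f := by
  obtain ⟨F, hdisj, hcirc, hmax⟩ := exists_maximal_completions M t
  obtain ⟨f, hfF, hFf⟩ := exists_ordinal_enumeration F ∅
  refine ⟨f, fun k ↦ ?_, fun k ↦ ?_, fun i hi s hs hts ↦ ?_⟩
  · rcases hfF k with hk | hk
    · exact hk ▸ finite_empty
    · exact (hcirc _ hk).finite.subset subset_union_right
  · rcases hfF k with hk | hk
    · exact hk ▸ empty_subset M.E
    · exact subset_union_right.trans (hcirc _ hk).subset_ground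
  · obtain ⟨s', hs', hmeet⟩ := hmax s hs hts
    obtain ⟨k, hk, rfl⟩ := hFf s' hs'
    have hFi : #F ≤ i.card := le_of_not_gt fun hlt ↦ hi ⟨F, hlt, hdisj, hcirc⟩
    exact ⟨k, hk.trans_le (ord_le.2 hFi), hmeet⟩

/-- What has to be covered at stage `j`, when `X` has been covered before: the next element `a j`
and the first `j` sets of the enumeration `v t`, for each finite `t ⊆ X`. -/
def stage (a : Ordinal.{u} → α) (v : Finset α → Ordinal.{u} → Set α) (j : Ordinal.{u})
    (X : Set α) : Set α :=
  insert (a j) (⋃ k : Iio j, ⋃ t : Finset X, v (t.map (Embedding.subtype (· ∈ X))) k)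

variable {a : Ordinal.{u} → α} {v : Finset α → Ordinal.{u} → Set α}

lemma subset_stage {t : Finset α} (ht : ↑t ⊆ X) {k : Ordinal.{u}} (hk : k < j) :
    v t k ⊆ stage a v j X := by
  classical
  intro x hx
  refine Or.inr (mem_iUnion₂.2 ⟨⟨k, hk⟩, t.subtype (· ∈ X), ?_⟩)
  rwa [Finset.subtype_map_of_mem fun x hx ↦ ht hx]

lemma stage_subset_ground (ha : a j ∈ M.E) (hv : ∀ t : Finset α, EnumeratesCompletions M t (v t)) :
    stage a v j X ⊆ M.E :=
  insert_subset ha (iUnion₂_subset fun _ _ ↦ (hv _).subset_ground _)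

lemma IsSmall.stage (hv : ∀ t : Finset α, EnumeratesCompletions M t (v t))
    (hX : IsSmall j.card X) : IsSmall j.card (stage a v j X) := by
  rw [_root_.stage, insert_eq]
  have hunion : IsSmall j.card
      (⋃ k : Iio j, ⋃ t : Finset X, v (t.map (Embedding.subtype (· ∈ X))) k) :=
    isSmall_iUnion_Iio le_rfl fun k ↦ isSmall_iUnion hX.mk_finset fun t ↦
      isSmall_of_finite ((hv _).finite k)
  exact (mk_union_le _ _).trans_lt
    (add_lt_of_lt (le_max_left _ _) (isSmall_of_finite (finite_singleton _)) hunion)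

lemma isCompletionClosed_transfiniteUnion {G : Ordinal.{u} → Set α → Set α}
    (hi : Order.IsSuccLimit i) (hv : ∀ t : Finset α, EnumeratesCompletions M t (v t))
    (hG : ∀ j < i, stage a v j (transfiniteUnion G j) ⊆
      transfiniteUnion G j ∪ G j (transfiniteUnion G j)) :
    IsCompletionClosed M (transfiniteUnion G i) i.card := by
  intro t ht htfin s hs hdisj hcirc
  lift t to Finset α using htfin
  obtain ⟨j, hj, htj⟩ := exists_finset_subset_transfiniteUnion hi ht
  by_contra hfew
  obtain ⟨k, hk, x, hxs, hxv⟩ := (hv t).exists_inter_nonempty i hfew s hs hcirc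
  have hlt : Order.succ (max j k) < i := hi.succ_lt (max_lt hj hk)
  have htm := htj.trans (transfiniteUnion_mono ((le_max_left j k).trans (Order.le_succ _)))
  have hx := hG _ hlt (subset_stage htm (Order.lt_succ_of_le (le_max_right j k)) hxv)
  rw [← transfiniteUnion_succ] at hx
  exact disjoint_left.1 hdisj hxs (transfiniteUnion_mono (hi.succ_lt hlt).le hx)

end Completions

section Construction

universe u

open Matroid Cardinal

variable {α : Type u} {M : Matroid α} {O : Set (α → ℤ)} {a : Ordinal.{u} → α}
  {v : Finset α → Ordinal.{u} → Set α} {i j : Ordinal.{u}} {A N X Z : Set α}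

/-- `Z` is a legal choice at stage `j` of the construction when `X` has already been peeled off: it
can be peeled off next, covers what stage `j` has to cover, and is small. -/
structure IsPeelingStep (M : Matroid α) (O : Set (α → ℤ)) (a : Ordinal.{u} → α)
    (v : Finset α → Ordinal.{u} → Set α) (j : Ordinal.{u}) (X Z : Set α) : Prop where
  isPeelable : IsPeelable (M ＼ X) (avoiding O X) Z
  stage_subset : stage a v j X ⊆ X ∪ Z
  isSmall : IsSmall j.card Z

lemma IsBalanceable.delete_of_isCompletionClosed [M.Finitary] (h : IsBalanceable M O)
    {κ : Cardinal.{u}} (hκ : ℵ₀ ≤ κ) (hN : #N ≤ κ) (hcl : IsCompletionClosed M N κ) :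
    IsBalanceable (M ＼ N) (avoiding O N) := by
  obtain ⟨Ostar, h, hbal⟩ := h
  exact ⟨_, h.delete N, h.isBalanced_delete_of_isCompletionClosed hbal hκ hN hcl⟩

lemma isPeelable_transfiniteUnion [M.Finitary] (h : IsBalanceable M O)
    (hv : ∀ t : Finset α, EnumeratesCompletions M t (v t)) {G : Ordinal.{u} → Set α → Set α}
    (hG : ∀ j < i, IsPeelable M O (transfiniteUnion G j) → IsSmall j.card (transfiniteUnion G j) →
      IsPeelingStep M O a v j (transfiniteUnion G j) (G j (transfiniteUnion G j))) :
    IsPeelable M O (transfiniteUnion G i) ∧ IsSmall i.card (transfiniteUnion G i) := by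
  induction i using WellFoundedLT.induction with
  | ind i ih =>
  have hprev j (hj : j < i) := ih j hj fun k hk ↦ hG k (hk.trans hj)
  have hstep j (hj : j < i) := hG j hj (hprev j hj).1 (hprev j hj).2
  have hsmall := isSmall_transfiniteUnion fun j hj ↦ (hstep j hj).isSmall
  refine ⟨?_, hsmall⟩
  rcases Ordinal.zero_or_succ_or_isSuccLimit i with rfl | ⟨j, rfl⟩ | hlim
  · rw [transfiniteUnion_zero]
    exact h.isPeelable_empty
  · rw [transfiniteUnion_succ]
    exact (hprev j (Order.lt_succ j)).1.union (hstep j (Order.lt_succ j)).isPeelable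
  · have hi : ℵ₀ ≤ i.card := Ordinal.aleph0_le_card.2 (Ordinal.omega0_le_of_isSuccLimit hlim)
    refine ⟨fun x hx ↦ ?_, hasDirectedPartition_transfiniteUnion
      (fun j hj ↦ (hstep j hj).isPeelable.hasDirectedPartition.mono (sep_subset _ _))
      fun j hj ↦ (hstep j hj).isPeelable.disjoint_of_delete,
      h.delete_of_isCompletionClosed hi (hsmall.mk_le hi)
        (isCompletionClosed_transfiniteUnion hlim hv fun j hj ↦ (hstep j hj).stage_subset)⟩
    obtain ⟨j, hj, hx⟩ := mem_transfiniteUnion.1 hx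
    exact ((hstep j hj).isPeelable.subset_ground hx).1

lemma exists_isPeelingStep (ha : a j ∈ M.E) (hv : ∀ t : Finset α, EnumeratesCompletions M t (v t))
    (hX : IsSmall j.card X)
    (ih : ∀ B ⊆ M.E \ X, IsSmall j.card B →
      ∃ Z, B ⊆ Z ∧ IsPeelable (M ＼ X) (avoiding O X) Z ∧ IsSmall #B Z) :
    ∃ Z, IsPeelingStep M O a v j X Z := by
  have hsmall : IsSmall j.card (stage a v j X \ X) := (hX.stage hv).subset sdiff_subset
  obtain ⟨Z, hBZ, hZ, hZsmall⟩ :=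
    ih (stage a v j X \ X) (sdiff_subset_sdiff_left (stage_subset_ground ha hv)) hsmall
  exact ⟨Z, hZ, sdiff_subset_iff.1 hBZ, hZsmall.of_isSmall_mk hsmall⟩

lemma IsBalanceable.exists_isPeelable [M.Finitary] (h : IsBalanceable M O) (hAE : A ⊆ M.E) :
    ∃ N, A ⊆ N ∧ IsPeelable M O N ∧ IsSmall #A N := by
  classical
  induction hc : #A using WellFoundedLT.induction generalizing M O A with
  | ind c ih =>
  subst hc
  rcases A.finite_or_infinite with hA | hA
  · obtain ⟨N, hN, hAN, hpeel⟩ := h.exists_isPeelable_of_finite hA hAE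
    exact ⟨N, hAN, hpeel, isSmall_of_finite hN⟩
  obtain ⟨a₀, ha₀⟩ := hA.nonempty
  obtain ⟨a, haA, hAa⟩ := exists_ordinal_enumeration A a₀
  rw [insert_eq_of_mem ha₀] at haA
  choose v hv using fun t : Finset α ↦ exists_enumeratesCompletions M t
  have hstep j X (hj : j < (#A).ord) (hX : IsPeelable M O X) (hXs : IsSmall j.card X) :
      ∃ Z, IsPeelingStep M O a v j X Z :=
    exists_isPeelingStep (hAE (haA j)) hv hXs fun B hB hBs ↦
      ih _ (hBs.mk_lt (aleph0_le_mk_iff.2 hA.to_subtype) (lt_ord.1 hj)) hX.isBalanceable hB rfl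
  choose! G hG using hstep
  have hchain i (hi : i ≤ (#A).ord) := isPeelable_transfiniteUnion h hv (G := G) (i := i)
    fun j hj ↦ hG j _ (hj.trans_le hi)
  refine ⟨transfiniteUnion G (#A).ord, fun x hx ↦ ?_, (hchain _ le_rfl).1, ?_⟩
  · obtain ⟨j, hj, rfl⟩ := hAa x hx
    have hj' := hG j _ hj (hchain j hj.le).1 (hchain j hj.le).2
    rcases hj'.stage_subset (mem_insert _ _) with hx | hx
    · exact transfiniteUnion_mono hj.le hx
    · exact subset_transfiniteUnion hj hx
  · simpa using (hchain _ le_rfl).2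

end Construction

/-- A finitary binary oriented matroid can be partitioned into directed circuits if and
only if it is balanced: there is a set of positive signed circuits whose domains are
pairwise disjoint with union the ground set iff every signed cocircuit has equally many
positive and negative elements. -/
theorem partition_into_directed_circuits_iff_balanced (M : Matroid α) [M.Finitary]
    (O Ostar : Set (α → ℤ))
    (hor : IsOrientation M O Ostar) (hbin : IsBinaryOrientation O Ostar) :
    (∃ 𝒜 ⊆ O, (∀ C ∈ 𝒜, IsPositive C) ∧
      𝒜.Pairwise (fun C C' => Disjoint (Function.support C) (Function.support C')) ∧
      ⋃ C ∈ 𝒜, Function.support C = M.E) ↔ IsBalanced Ostar := by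
  have h := hor.isBinarySigning hbin
  refine ⟨h.isBalanced_of_hasDirectedPartition, fun hbal ↦ ?_⟩
  have hM : IsBalanceable M O := ⟨Ostar, h, hbal⟩
  obtain ⟨N, hEN, hN, -⟩ := hM.exists_isPeelable Subset.rfl
  exact hN.subset_ground.antisymm hEN ▸ hN.hasDirectedPartition
end
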